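/- arXiv:1808.09305 — 4 statements merged into one kernel-verified Lean document; each statement's English description precedes it below -/
import Mathlib

section
/- Let N ≥ 2, m ∈ ℕ, and let φ be a C^m function with compact support on ℝ^{N−1}. Then for every multi-index α ∈ ℕ₀^N with 1 ≤ |α| ≤ m there exists a function ψ^α of class C^{m−|α|} with compact support on ℝ^{N−1} satisfying ∫_{ℝ^{N−1}} ψ^α(y') dy' = 0, such that for every x' , y' ∈ ℝ^{N−1} and every x_N > 0, the partial derivative ∂^α with respect to x = (x', x_N) of the function x ↦ x_N^{−(N−1)} φ((x' − y')/x_N) equals x_N^{−(|α|+N−1)} ψ^α((x' − y')/x_N). -/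
open MeasureTheory
open scoped ENNReal

/-- The partial derivative of `f : ℝ^k → ℝ` in the `i`-th coordinate direction. -/
noncomputable def partialDer {k : ℕ} (i : Fin k) (f : (Fin k → ℝ) → ℝ) :
    (Fin k → ℝ) → ℝ :=
  fun x => fderiv ℝ f x (Pi.single i 1)

/-- The iterated partial derivative `∂^α` associated to a multi-index `α : Fin k → ℕ`. -/
noncomputable def multiPartialDer {k : ℕ} (α : Fin k → ℕ) (f : (Fin k → ℝ) → ℝ) :
    (Fin k → ℝ) → ℝ :=
  (List.finRange k).foldr (fun i g => (partialDer i)^[α i] g) f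

lemma aux_integral {n : ℕ} (ψ : (Fin n → ℝ) → ℝ) (hψ : ContDiff ℝ 1 ψ)
    (hc : HasCompactSupport ψ) (v : Fin n → ℝ) : ∫ y, fderiv ℝ ψ y v = 0 := by
  have hd : Continuous (fun y => fderiv ℝ ψ y v) :=
    (hψ.continuous_fderiv one_ne_zero).clm_apply continuous_const
  have hdc : HasCompactSupport (fun y => fderiv ℝ ψ y v) := hc.fderiv_apply (𝕜 := ℝ) v
  have := integral_mul_fderiv_eq_neg_fderiv_mul_of_integrable (μ := (volume : Measure (Fin n → ℝ)))
    (f := fun _ => (1 : ℝ)) (g := ψ) (v := v) (by simp)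
    (by simpa using hd.integrable_of_hasCompactSupport hdc)
    (by simpa using hψ.continuous.integrable_of_hasCompactSupport hc)
    (fun x _ => by fun_prop) (fun x _ => hψ.differentiable one_ne_zero x)
  simpa using this

lemma aux_integral_coord {n : ℕ} (ψ : (Fin n → ℝ) → ℝ) (hψ : ContDiff ℝ 1 ψ)
    (hc : HasCompactSupport ψ) (j : Fin n) :
    ∫ y, y j * fderiv ℝ ψ y (Pi.single j 1) = - ∫ y, ψ y := by
  have hd : Continuous (fun y => fderiv ℝ ψ y (Pi.single j 1)) :=
    (hψ.continuous_fderiv one_ne_zero).clm_apply continuous_const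
  have hdc : HasCompactSupport (fun y => fderiv ℝ ψ y (Pi.single j 1)) :=
    hc.fderiv_apply (𝕜 := ℝ) _
  have h1 : ∀ y : Fin n → ℝ, fderiv ℝ (fun y : Fin n → ℝ => y j) y (Pi.single j 1) = 1 := by
    intro y
    have : HasFDerivAt (fun y : Fin n → ℝ => y j) (ContinuousLinearMap.proj (R := ℝ) j) y :=
      (ContinuousLinearMap.proj (R := ℝ) (φ := fun _ : Fin n => ℝ) j).hasFDerivAt
    rw [this.fderiv]; simp
  have := integral_mul_fderiv_eq_neg_fderiv_mul_of_integrable (μ := (volume : Measure (Fin n → ℝ)))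
    (f := fun y => y j) (g := ψ) (v := Pi.single j 1)
    (by simpa [h1] using hψ.continuous.integrable_of_hasCompactSupport hc)
    (((continuous_apply j).mul hd).integrable_of_hasCompactSupport hdc.mul_left)
    (((continuous_apply j).mul hψ.continuous).integrable_of_hasCompactSupport hc.mul_left)
    (fun x _ => by fun_prop) (fun x _ => hψ.differentiable one_ne_zero x)
  simpa [h1] using this

def Good (n m k : ℕ) (G : (Fin n → ℝ) → (Fin (n + 1) → ℝ) → ℝ) : Prop :=
  ∃ ψ : (Fin n → ℝ) → ℝ, ContDiff ℝ ((m - k : ℕ) : ℕ∞) ψ ∧ HasCompactSupport ψ ∧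
    (1 ≤ k → ∫ y, ψ y = 0) ∧
    ∀ (y' : Fin n → ℝ) (x : Fin (n + 1) → ℝ), 0 < x (Fin.last n) →
      G y' x = (x (Fin.last n)) ^ (-((k : ℤ) + n)) *
        ψ (fun i => (x (Fin.castSucc i) - y' i) / x (Fin.last n))

lemma aux_fderiv {n : ℕ} (k : ℤ) (ψ : (Fin n → ℝ) → ℝ) (hψ : Differentiable ℝ ψ)
    (y' : Fin n → ℝ) (x v : Fin (n + 1) → ℝ) (hx : 0 < x (Fin.last n)) :
    fderiv ℝ (fun x : Fin (n + 1) → ℝ => (x (Fin.last n)) ^ k *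
        ψ (fun i => (x (Fin.castSucc i) - y' i) / x (Fin.last n))) x v =
      (x (Fin.last n)) ^ (k - 1) * (
        k * v (Fin.last n) * ψ (fun i => (x (Fin.castSucc i) - y' i) / x (Fin.last n)) +
        fderiv ℝ ψ (fun i => (x (Fin.castSucc i) - y' i) / x (Fin.last n))
          (fun i => v (Fin.castSucc i) -
            v (Fin.last n) * ((x (Fin.castSucc i) - y' i) / x (Fin.last n)))) := by
  have hne := hx.ne'
  have hne2 : (x (Fin.last n)) ^ 2 ≠ 0 := pow_ne_zero 2 hne
  have hline : ∀ i : Fin (n + 1), HasDerivAt (fun s : ℝ => (x + s • v) i) (v i) 0 := by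
    intro i
    simpa using ((hasDerivAt_id (0 : ℝ)).mul_const (v i)).const_add (x i)
  have hdiff : DifferentiableAt ℝ (fun x : Fin (n + 1) → ℝ => (x (Fin.last n)) ^ k *
        ψ (fun i => (x (Fin.castSucc i) - y' i) / x (Fin.last n))) x := by
    apply DifferentiableAt.mul
    · exact DifferentiableAt.comp (g := fun s : ℝ => s ^ k)
        (f := fun x : Fin (n + 1) → ℝ => x (Fin.last n)) x
        (differentiableAt_zpow.2 (Or.inl hne)) (by fun_prop)
    · refine (hψ _).comp x (differentiableAt_pi.2 fun i => ?_)
      simp only [div_eq_mul_inv]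
      exact DifferentiableAt.fun_mul (by fun_prop) (DifferentiableAt.fun_inv (by fun_prop) hne)
  rw [← hdiff.lineDeriv_eq_fderiv]
  have hz : HasDerivAt (fun s : ℝ => (fun i : Fin n =>
      ((x + s • v) (Fin.castSucc i) - y' i) / (x + s • v) (Fin.last n)))
      (fun i => (v (Fin.castSucc i) * x (Fin.last n) -
        (x (Fin.castSucc i) - y' i) * v (Fin.last n)) / x (Fin.last n) ^ 2) 0 := by
    refine hasDerivAt_pi.2 fun i => ?_
    have := ((hline (Fin.castSucc i)).sub_const (y' i)).fun_div (hline (Fin.last n))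
      (by simpa using hne)
    simpa using this
  have h1 := HasFDerivAt.comp_hasDerivAt_of_eq (0 : ℝ)
    (hψ (fun i => (x (Fin.castSucc i) - y' i) / x (Fin.last n))).hasFDerivAt hz (by simp)
  have h2 := HasDerivAt.comp_of_eq (0 : ℝ) (hasDerivAt_zpow k (x (Fin.last n)) (Or.inl hne))
    (hline (Fin.last n)) (by simp)
  have h3 := h2.fun_mul h1
  have : lineDeriv ℝ (fun x : Fin (n + 1) → ℝ => (x (Fin.last n)) ^ k *
        ψ (fun i => (x (Fin.castSucc i) - y' i) / x (Fin.last n))) x v = _ := h3.deriv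
  rw [this]
  have e : (fun i => (v (Fin.castSucc i) * x (Fin.last n) -
        (x (Fin.castSucc i) - y' i) * v (Fin.last n)) / x (Fin.last n) ^ 2)
      = (x (Fin.last n))⁻¹ • (fun i => v (Fin.castSucc i) -
            v (Fin.last n) * ((x (Fin.castSucc i) - y' i) / x (Fin.last n))) := by
    funext i
    simp only [Pi.smul_apply, smul_eq_mul]
    generalize x (Fin.last n) = a at hne hne2 ⊢
    field_simp
  rw [e, map_smul]
  simp only [Function.comp, zero_smul, add_zero, smul_eq_mul]
  rw [zpow_sub_one₀ hne]
  ring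

lemma Good.step {n m k : ℕ} {G : (Fin n → ℝ) → (Fin (n + 1) → ℝ) → ℝ} (h : Good n m k G)
    (hk : k + 1 ≤ m) (i : Fin (n + 1)) : Good n m (k + 1) (fun y' => partialDer i (G y')) := by
  obtain ⟨ψ, hs, hc, hint, hG⟩ := h
  have hsm : ((m - k : ℕ) : ℕ∞) = ((m - (k + 1) : ℕ) : ℕ∞) + 1 := by
    norm_cast; omega
  have hs1 : ContDiff ℝ 1 ψ := hs.of_le (by exact_mod_cast (by omega : 1 ≤ m - k))
  have hdψ : Differentiable ℝ ψ := hs1.differentiable one_ne_zero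
  have hfd : ContDiff ℝ ((m - (k + 1) : ℕ) : ℕ∞) (fderiv ℝ ψ) :=
    hs.fderiv_right (by rw [hsm]; rfl)
  set v : Fin (n + 1) → ℝ := Pi.single i 1 with hv
  refine ⟨fun z => (-((k : ℝ) + n)) * v (Fin.last n) * ψ z +
    fderiv ℝ ψ z (fun i => v (Fin.castSucc i) - v (Fin.last n) * z i), ?_, ?_, ?_, ?_⟩
  · refine ContDiff.add (contDiff_const.mul (hs.of_le ?_)) (hfd.clm_apply ?_)
    · exact_mod_cast (by omega : m - (k + 1) ≤ m - k)
    · fun_prop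
  · refine HasCompactSupport.add hc.mul_left ?_
    refine (hc.fderiv (𝕜 := ℝ)).mono ?_
    intro z hz
    simp only [Function.mem_support] at hz ⊢
    intro h0
    exact hz (by simp [h0])
  · intro _
    have hiψ : Integrable ψ := hs1.continuous.integrable_of_hasCompactSupport hc
    induction i using Fin.lastCases with
    | cast j =>
      have e1 : v (Fin.last n) = 0 := by simp [hv, (Fin.castSucc_lt_last j).ne']
      have e2 : (fun i => v (Fin.castSucc i)) = Pi.single j 1 := by
        funext i; simp [hv, Pi.single_apply]
      simp only [e1, zero_mul, mul_zero, zero_add, sub_zero, e2]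
      exact aux_integral ψ hs1 hc _
    | last =>
      have e1 : v (Fin.last n) = 1 := by simp [hv]
      have e2 : ∀ i : Fin n, v (Fin.castSucc i) = 0 := by
        intro i; simp [hv, (Fin.castSucc_lt_last i).ne]
      have e3 : ∀ z : Fin n → ℝ, fderiv ℝ ψ z (fun i => -z i) =
          - ∑ j, z j * fderiv ℝ ψ z (Pi.single j 1) := by
        intro z
        have : (fun i => -z i) = - ∑ j, z j • (Pi.single j (1 : ℝ) : Fin n → ℝ) := by
          funext i
          simp [Finset.sum_apply, Pi.single_apply]
        rw [this, map_neg, map_sum]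
        simp
      have hij : ∀ j : Fin n, Integrable (fun z : Fin n → ℝ =>
          z j * fderiv ℝ ψ z (Pi.single j 1)) := fun j =>
        ((continuous_apply j).mul ((hs1.continuous_fderiv one_ne_zero).clm_apply
          continuous_const)).integrable_of_hasCompactSupport
          (HasCompactSupport.mul_left (hc.fderiv_apply (𝕜 := ℝ) _))
      simp only [e1, e2, mul_one, one_mul, zero_sub, e3]
      rw [integral_add (hiψ.const_mul _) (Integrable.fun_neg (integrable_finsetSum _ fun j _ => hij j)),
        integral_const_mul, integral_neg, integral_finsetSum _ fun j _ => hij j]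
      simp only [aux_integral_coord ψ hs1 hc]
      rcases Nat.eq_zero_or_pos k with rfl | hk0
      · simp
      · simp [hint hk0]
  · intro y' x hx
    have hev : G y' =ᶠ[nhds x] fun x => (x (Fin.last n)) ^ (-((k : ℤ) + n)) *
        ψ (fun i => (x (Fin.castSucc i) - y' i) / x (Fin.last n)) := by
      have : ∀ᶠ x' in nhds x, 0 < x' (Fin.last n) :=
        (continuous_apply (Fin.last n)).continuousAt.eventually (lt_mem_nhds hx)
      filter_upwards [this] with x' hx' using hG y' x' hx'
    simp only [partialDer]
    rw [hev.fderiv_eq, aux_fderiv _ _ hdψ _ _ _ hx]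
    congr 1
    · congr 1; push_cast; ring
    · push_cast; rfl

lemma Good.iter {n m k : ℕ} {G : (Fin n → ℝ) → (Fin (n + 1) → ℝ) → ℝ} (h : Good n m k G)
    (i : Fin (n + 1)) (p : ℕ) (hk : p + k ≤ m) :
    Good n m (p + k) (fun y' => (partialDer i)^[p] (G y')) := by
  induction p with
  | zero => simpa using h
  | succ p ih =>
    have := (ih (by omega)).step (by omega) i
    simp only [Function.iterate_succ_apply']
    convert this using 1
    omega

lemma Good.fold {n m : ℕ} {G : (Fin n → ℝ) → (Fin (n + 1) → ℝ) → ℝ} (h : Good n m 0 G)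
    (α : Fin (n + 1) → ℕ) (l : List (Fin (n + 1))) (hk : (l.map α).sum ≤ m) :
    Good n m (l.map α).sum
      (fun y' => l.foldr (fun i g => (partialDer i)^[α i] g) (G y')) := by
  induction l with
  | nil => simpa using h
  | cons i l ih =>
    simp only [List.map_cons, List.sum_cons] at hk ⊢
    exact (ih (by omega)).iter i (α i) hk

/-- Let `N ≥ 2`, `m ∈ ℕ`, and let `φ` be a `C^m` function with compact
support on `ℝ^{N-1}`.  For every multi-index `α ∈ ℕ₀^N` with `1 ≤ |α| ≤ m` there is a
function `ψ^α` of class `C^{m-|α|}` with compact support on `ℝ^{N-1}` with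
`∫ ψ^α = 0`, such that for all `x', y' ∈ ℝ^{N-1}` and all `x_N > 0`,
`∂^α (x ↦ x_N^{-(N-1)} φ((x'-y')/x_N)) = x_N^{-(|α|+N-1)} ψ^α((x'-y')/x_N)`.
Here we write `N = n + 1` with `n ≥ 1`. -/
theorem statement1 (n : ℕ) (hn : 1 ≤ n) (m : ℕ) (hm : 1 ≤ m)
    (φ : (Fin n → ℝ) → ℝ) (hφ : ContDiff ℝ m φ) (hφc : HasCompactSupport φ)
    (α : Fin (n + 1) → ℕ) (hα1 : 1 ≤ ∑ i, α i) (hαm : ∑ i, α i ≤ m) :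
    ∃ ψ : (Fin n → ℝ) → ℝ,
      ContDiff ℝ (m - ∑ i, α i) ψ ∧
      HasCompactSupport ψ ∧
      (∫ y, ψ y) = 0 ∧
      ∀ (y' x' : Fin n → ℝ) (t : ℝ), 0 < t →
        multiPartialDer α
            (fun x => (x (Fin.last n)) ^ (-(n : ℤ)) *
              φ (fun i => (x (Fin.castSucc i) - y' i) / x (Fin.last n)))
            (Fin.snoc x' t)
          = t ^ (-((∑ i, α i : ℤ) + n)) * ψ (fun i => (x' i - y' i) / t) := by
  have h0 : Good n m 0 (fun y' x => (x (Fin.last n)) ^ (-(n : ℤ)) *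
      φ (fun i => (x (Fin.castSucc i) - y' i) / x (Fin.last n))) :=
    ⟨φ, by simpa using hφ, hφc, by simp, fun y' x _ => by simp⟩
  have hsum : ((List.finRange (n + 1)).map α).sum = ∑ i, α i := by
    rw [← List.ofFn_eq_map, List.sum_ofFn]
  have h1 := h0.fold α (List.finRange (n + 1)) (by rw [hsum]; exact hαm)
  rw [hsum] at h1
  obtain ⟨ψ, hs, hc, hint, hG⟩ := h1
  refine ⟨ψ, ?_, hc, hint hα1, ?_⟩
  · have : ((m : WithTop ℕ∞) - ((∑ i, α i : ℕ) : WithTop ℕ∞)) = (((m - ∑ i, α i : ℕ) : ℕ∞) : WithTop ℕ∞) := by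
      rfl
    rw [this]; exact hs
  · intro y' x' t ht
    have := hG y' (Fin.snoc x' t) (by simpa using ht)
    simpa [multiPartialDer] using this
end

section
/- Let U ⊆ ℝ^N be open, 1 ≤ p < ∞, 0 < s < 1, and let σ : U → (0,∞] be a screening function. Then the screened space W̃^{s,p}_{(σ)}(U) is sequentially complete with respect to its seminorm: if {f_n}_{n∈ℕ} ⊆ W̃^{s,p}_{(σ)}(U) satisfies |f_n − f_m|_{W̃^{s,p}_{(σ)}(U)} → 0 as n, m → ∞, then there exists f ∈ W̃^{s,p}_{(σ)}(U) such that |f_n − f|_{W̃^{s,p}_{(σ)}(U)} → 0 as n → ∞. -/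
open MeasureTheory Metric Filter
open scoped ENNReal

/-- The screened homogeneous fractional Sobolev seminorm
`|f|_{W̃^{s,p}_{(σ)}(U)} = (∫_U ∫_{B(x,σ(x)) ∩ U} |f(y)-f(x)|^p / |y-x|^{sp+N} dy dx)^{1/p}`
of a function `f : ℝ^N → ℝ`, valued in `ℝ≥0∞`. -/
noncomputable def screenedSeminorm (N : ℕ) (s p : ℝ)
    (U : Set (EuclideanSpace ℝ (Fin N))) (σ : EuclideanSpace ℝ (Fin N) → ℝ≥0∞)
    (f : EuclideanSpace ℝ (Fin N) → ℝ) : ℝ≥0∞ :=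
  (∫⁻ x in U, ∫⁻ y in U ∩ {y | edist y x < σ x},
      ENNReal.ofReal (|f y - f x| ^ p / dist y x ^ (s * p + N))) ^ (1 / p)

abbrev EE (N : ℕ) := EuclideanSpace ℝ (Fin N)

def DD {N : ℕ} (U : Set (EE N)) (σ : EE N → ℝ≥0∞) : Set (EE N × EE N) :=
  {z | z.1 ∈ U ∧ z.2 ∈ U ∧ edist z.2 z.1 < σ z.1}

noncomputable def nu (N : ℕ) (s p : ℝ) (U : Set (EE N)) (σ : EE N → ℝ≥0∞) : Measure (EE N × EE N) :=
  (((volume : Measure (EE N)).prod volume).restrict (DD U σ)).withDensity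
    (fun z => (ENNReal.ofReal (dist z.2 z.1 ^ (s * p + N)))⁻¹)

def dif {N : ℕ} (f : EE N → ℝ) (z : EE N × EE N) : ℝ := f z.2 - f z.1

lemma isOpen_DD {N : ℕ} {U : Set (EE N)} (hU : IsOpen U) {σ : EE N → ℝ≥0∞}
    (hσ : LowerSemicontinuousOn σ U) : IsOpen (DD U σ) := by
  rw [isOpen_iff_mem_nhds]
  rintro ⟨x, y⟩ ⟨hx, hy, hxy⟩
  obtain ⟨c, hc1, hc2⟩ := exists_between hxy
  have h1 : ∀ᶠ x' in nhds x, c < σ x' := by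
    have := hσ x hx c hc2
    rwa [hU.nhdsWithin_eq hx] at this
  have h1' : ∀ᶠ z in nhds (x, y), c < σ z.1 := (continuous_fst.tendsto (x, y)).eventually h1
  have h2 : ∀ᶠ z in nhds (x, y), edist z.2 z.1 < c :=
    (continuous_snd.edist continuous_fst).continuousAt.eventually_lt_const hc1
  have h3 : ∀ᶠ z in nhds (x, y), z.1 ∈ U :=
    (continuous_fst.tendsto (x, y)).eventually (hU.mem_nhds hx)
  have h4 : ∀ᶠ z in nhds (x, y), z.2 ∈ U :=
    (continuous_snd.tendsto (x, y)).eventually (hU.mem_nhds hy)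
  filter_upwards [h1', h2, h3, h4] with z a b c d
  exact ⟨c, d, b.trans a⟩

lemma restrict_DD_le {N : ℕ} (U : Set (EE N)) (σ : EE N → ℝ≥0∞) :
    ((volume : Measure (EE N)).prod volume).restrict (DD U σ) ≤
      (volume.restrict U).prod (volume.restrict U) := by
  rw [Measure.prod_restrict]
  have h : DD U σ ⊆ U ×ˢ U := fun z hz => ⟨hz.1, hz.2.1⟩
  exact Measure.restrict_mono h le_rfl

lemma nu_ac {N : ℕ} (s p : ℝ) (U : Set (EE N)) (σ : EE N → ℝ≥0∞) :
    nu N s p U σ ≪ (volume.restrict U).prod (volume.restrict U) :=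
  (withDensity_absolutelyContinuous _ _).trans (restrict_DD_le U σ).absolutelyContinuous

lemma aesm_dif_prod {N : ℕ} {U : Set (EE N)} {f : EE N → ℝ}
    (hf : AEStronglyMeasurable f (volume.restrict U)) :
    AEStronglyMeasurable (dif f) ((volume.restrict U).prod (volume.restrict U)) :=
  hf.comp_snd.sub hf.comp_fst

lemma aesm_dif {N : ℕ} (s p : ℝ) {U : Set (EE N)} (σ : EE N → ℝ≥0∞) {f : EE N → ℝ}
    (hf : AEStronglyMeasurable f (volume.restrict U)) :
    AEStronglyMeasurable (dif f) (nu N s p U σ) :=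
  (aesm_dif_prod hf).mono_ac (nu_ac s p U σ)

lemma meas_k (N : ℕ) (e : ℝ) :
    Measurable (fun z : EE N × EE N => (ENNReal.ofReal (dist z.2 z.1 ^ e))⁻¹) := by
  fun_prop

lemma key_pt {N : ℕ} {s p : ℝ} (hp : 1 ≤ p) (hs0 : 0 < s) (f : EE N → ℝ) (x y : EE N) :
    ENNReal.ofReal (|f y - f x| ^ p / dist y x ^ (s * p + N)) =
      (ENNReal.ofReal (dist y x ^ (s * p + N)))⁻¹ * ‖f y - f x‖ₑ ^ p := by
  have hp0 : 0 < p := by linarith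
  have he : 0 < s * p + N := by positivity
  rcases eq_or_ne y x with rfl | hne
  · simp [hp0, hp0.ne', Real.zero_rpow]
  · have hd : 0 < dist y x ^ (s * p + N) := Real.rpow_pos_of_pos (dist_pos.2 hne) _
    rw [ENNReal.ofReal_div_of_pos hd, ← ENNReal.ofReal_rpow_of_nonneg (abs_nonneg _) hp0.le,
      ← Real.norm_eq_abs, ofReal_norm, ENNReal.div_eq_inv_mul]

lemma seminorm_eq {N : ℕ} {s p : ℝ} (hp : 1 ≤ p) (hs0 : 0 < s) {U : Set (EE N)} (hU : IsOpen U)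
    {σ : EE N → ℝ≥0∞} (hσ : LowerSemicontinuousOn σ U) {f : EE N → ℝ}
    (hf : AEStronglyMeasurable f (volume.restrict U)) :
    screenedSeminorm N s p U σ f = eLpNorm (dif f) (ENNReal.ofReal p) (nu N s p U σ) := by
  have hp0 : 0 < p := by linarith
  have hD : MeasurableSet (DD U σ) := (isOpen_DD hU hσ).measurableSet
  have hae : AEMeasurable (fun z => ‖dif f z‖ₑ ^ p)
      ((volume.restrict U).prod (volume.restrict U)) := (aesm_dif_prod hf).enorm.pow_const p
  rw [eLpNorm_eq_lintegral_rpow_enorm_toReal (by simpa using hp0) (by simp),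
    ENNReal.toReal_ofReal hp0.le]
  unfold screenedSeminorm
  congr 1
  rw [nu, lintegral_withDensity_eq_lintegral_mul₀ (meas_k N _).aemeasurable
    (hae.mono_measure (restrict_DD_le U σ))]
  have : ((volume : Measure (EE N)).prod volume).restrict (DD U σ) =
      ((volume.restrict U).prod (volume.restrict U)).restrict (DD U σ) := by
    rw [Measure.prod_restrict, Measure.restrict_restrict hD]
    congr 1
    ext z
    simp only [DD, Set.mem_inter_iff, Set.mem_prod, Set.mem_ofPred_eq]
    tauto
  rw [this, ← lintegral_indicator hD, lintegral_prod _
    (((meas_k N _).aemeasurable.mul hae).indicator hD)]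
  apply setLIntegral_congr_fun hU.measurableSet
  intro x hx
  have hm : MeasurableSet {y : EE N | edist y x < σ x} :=
    (isOpen_lt (by fun_prop) continuous_const).measurableSet
  dsimp only
  rw [Set.inter_comm, ← Measure.restrict_restrict hm, ← lintegral_indicator hm]
  apply setLIntegral_congr_fun hU.measurableSet
  intro y hy
  by_cases h : edist y x < σ x
  · have h2 : (x, y) ∈ DD U σ := ⟨hx, hy, h⟩
    dsimp only
    rw [Set.indicator_of_mem (show y ∈ {y : EE N | edist y x < σ x} from h),
      Set.indicator_of_mem h2]
    exact key_pt hp hs0 f x y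
  · have h2 : (x, y) ∉ DD U σ := fun h' => h h'.2.2
    dsimp only
    rw [Set.indicator_of_notMem (show y ∉ {y : EE N | edist y x < σ x} from h),
      Set.indicator_of_notMem h2]

lemma nu_ae_mem {N : ℕ} (s p : ℝ) {U : Set (EE N)} (hU : IsOpen U)
    {σ : EE N → ℝ≥0∞} (hσ : LowerSemicontinuousOn σ U) :
    ∀ᵐ z ∂(nu N s p U σ), z ∈ DD U σ :=
  (withDensity_absolutelyContinuous _ _).ae_le (ae_restrict_mem (isOpen_DD hU hσ).measurableSet)

/-- L^1 control on rectangles inside the screening domain. -/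
lemma rect_bound {N : ℕ} {s p : ℝ} (hp : 1 ≤ p) (hs0 : 0 < s) {U : Set (EE N)}
    {σ : EE N → ℝ≥0∞} (hU : IsOpen U) (hσ : LowerSemicontinuousOn σ U)
    {A B : Set (EE N)} (hA : MeasurableSet A) (hB : MeasurableSet B)
    (hAf : volume A ≠ ⊤) (hBf : volume B ≠ ⊤) {R : ℝ} (hR : ∀ x ∈ A, ∀ y ∈ B, dist y x ≤ R)
    (hAB : A ×ˢ B ⊆ DD U σ) :
    ∃ C : ℝ≥0∞, C ≠ ⊤ ∧ ∀ h : EE N → ℝ, AEStronglyMeasurable h (volume.restrict U) →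
      ∫⁻ z in A ×ˢ B, ‖dif h z‖ₑ ∂(volume.prod volume) ≤ C * screenedSeminorm N s p U σ h := by
  have hp0 : 0 < p := by linarith
  have he : 0 < s * p + N := by positivity
  set c : ℝ≥0∞ := ENNReal.ofReal ((max R 1) ^ (s * p + N)) with hc
  have hc0 : c ≠ 0 := by
    rw [hc, Ne, ENNReal.ofReal_eq_zero, not_le]; positivity
  have hct : c ≠ ⊤ := ENNReal.ofReal_ne_top
  have hle : ((volume : Measure (EE N)).prod volume).restrict (A ×ˢ B) ≤ c • nu N s p U σ := by
    rw [Measure.le_iff]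
    intro S hS
    rw [Measure.restrict_apply hS, Measure.smul_apply, nu, withDensity_apply _ hS,
      Measure.restrict_restrict hS, smul_eq_mul]
    calc (volume.prod volume) (S ∩ A ×ˢ B)
        = c * ∫⁻ z in S ∩ A ×ˢ B, c⁻¹ ∂(volume.prod volume) := by
          rw [setLIntegral_const, ← mul_assoc, ENNReal.mul_inv_cancel hc0 hct, one_mul]
      _ ≤ c * ∫⁻ z in S ∩ A ×ˢ B, (ENNReal.ofReal (dist z.2 z.1 ^ (s * p + N)))⁻¹
            ∂(volume.prod volume) := by
          gcongr c * ?_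
          apply setLIntegral_mono' (hS.inter (hA.prod hB))
          rintro z ⟨-, hz1, hz2⟩
          apply ENNReal.inv_le_inv.2
          apply ENNReal.ofReal_le_ofReal
          apply Real.rpow_le_rpow dist_nonneg _ he.le
          exact (hR _ hz1 _ hz2).trans (le_max_left _ _)
      _ ≤ _ := by
          gcongr c * ?_
          apply lintegral_mono_set
          exact Set.inter_subset_inter_right _ hAB
  have hfin : ((volume : Measure (EE N)).prod volume) (A ×ˢ B) ≠ ⊤ := by
    rw [Measure.prod_prod]; exact ENNReal.mul_ne_top hAf hBf
  set v := ((volume : Measure (EE N)).prod volume) (A ×ˢ B) with hv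
  have hp1 : (1 : ℝ≥0∞) ≤ ENNReal.ofReal p := by simpa using hp
  refine ⟨c ^ (1 / ENNReal.ofReal p).toReal * v ^ (1 / (1 : ℝ≥0∞).toReal - 1 / (ENNReal.ofReal p).toReal), ?_, ?_⟩
  · apply ENNReal.mul_ne_top
    · exact ENNReal.rpow_ne_top_of_nonneg ENNReal.toReal_nonneg hct
    · apply ENNReal.rpow_ne_top_of_nonneg _ hfin
      rw [ENNReal.toReal_ofReal hp0.le]
      simp only [ENNReal.toReal_one, div_one, sub_nonneg]
      rw [div_le_one hp0]; exact hp
  · intro h hh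
    rw [seminorm_eq hp hs0 hU hσ hh]
    have hm : AEStronglyMeasurable (dif h) ((volume.prod volume).restrict (A ×ˢ B)) := by
      apply (aesm_dif s p σ hh).mono_ac
      refine hle.absolutelyContinuous.trans ?_
      exact Measure.smul_absolutelyContinuous
    have := eLpNorm_le_eLpNorm_mul_rpow_measure_univ hp1 hm
    rw [eLpNorm_one_eq_lintegral_enorm, Measure.restrict_apply_univ] at this
    refine this.trans ?_
    have h2 := eLpNorm_mono_measure (p := ENNReal.ofReal p) (dif h) hle
    rw [eLpNorm_smul_measure_of_ne_zero hc0, smul_eq_mul] at h2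
    calc _ ≤ _ := mul_le_mul_left h2 _
      _ = _ := by ring

lemma rect_bound2 {N : ℕ} {s p : ℝ} (hp : 1 ≤ p) (hs0 : 0 < s) {U : Set (EE N)}
    {σ : EE N → ℝ≥0∞} (hU : IsOpen U) (hσ : LowerSemicontinuousOn σ U)
    {A B : Set (EE N)} (hA : MeasurableSet A) (hB : MeasurableSet B) (hAU : A ⊆ U) (hBU : B ⊆ U)
    (hAf : volume A ≠ ⊤) (hBf : volume B ≠ ⊤) {R : ℝ} (hR : ∀ x ∈ A, ∀ y ∈ B, dist y x ≤ R)
    (hAB : A ×ˢ B ⊆ DD U σ ∨ B ×ˢ A ⊆ DD U σ) :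
    ∃ C : ℝ≥0∞, C ≠ ⊤ ∧ ∀ h : EE N → ℝ, AEStronglyMeasurable h (volume.restrict U) →
      ∫⁻ x in A, ∫⁻ y in B, ‖h y - h x‖ₑ ≤ C * screenedSeminorm N s p U σ h := by
  rcases hAB with hAB | hAB
  · obtain ⟨C, hC, hb⟩ := rect_bound hp hs0 hU hσ hA hB hAf hBf hR hAB
    refine ⟨C, hC, fun h hh => ?_⟩
    have := hb h hh
    rw [← Measure.prod_restrict, lintegral_prod] at this
    · exact this
    · exact ((hh.mono_set hBU).comp_snd.sub (hh.mono_set hAU).comp_fst).enorm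
  · obtain ⟨C, hC, hb⟩ := rect_bound hp hs0 hU hσ hB hA hBf hAf (R := R)
      (fun x hx y hy => by rw [dist_comm]; exact hR y hy x hx) hAB
    refine ⟨C, hC, fun h hh => ?_⟩
    have := hb h hh
    rw [← Measure.prod_restrict, lintegral_prod_symm] at this
    · refine le_trans (le_of_eq ?_) this
      simp only [dif]
      congr 1; ext x; congr 1; ext y
      rw [← enorm_neg, neg_sub]
    · exact ((hh.mono_set hAU).comp_snd.sub (hh.mono_set hBU).comp_fst).enorm

lemma prop_bound {N : ℕ} {s p : ℝ} (hp : 1 ≤ p) (hs0 : 0 < s) {U : Set (EE N)}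
    {σ : EE N → ℝ≥0∞} (hU : IsOpen U) (hσ : LowerSemicontinuousOn σ U)
    {A B : Set (EE N)} (hA : MeasurableSet A) (hB : MeasurableSet B) (hAU : A ⊆ U) (hBU : B ⊆ U)
    (hA0 : volume A ≠ 0)
    (hAf : volume A ≠ ⊤) (hBf : volume B ≠ ⊤) {R : ℝ} (hR : ∀ x ∈ A, ∀ y ∈ B, dist y x ≤ R)
    (hAB : A ×ˢ B ⊆ DD U σ ∨ B ×ˢ A ⊆ DD U σ) :
    ∃ C : ℝ≥0∞, C ≠ ⊤ ∧ ∀ h : EE N → ℝ, AEStronglyMeasurable h (volume.restrict U) →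
      ∫⁻ y in B, ‖h y‖ₑ ≤ C * (screenedSeminorm N s p U σ h + ∫⁻ x in A, ‖h x‖ₑ) := by
  obtain ⟨C, hC, hb⟩ := rect_bound2 hp hs0 hU hσ hA hB hAU hBU hAf hBf hR hAB
  refine ⟨(volume A)⁻¹ * (C + volume B), ENNReal.mul_ne_top (ENNReal.inv_ne_top.2 hA0)
    (ENNReal.add_ne_top.2 ⟨hC, hBf⟩), fun h hh => ?_⟩
  have h1 : volume A * ∫⁻ y in B, ‖h y‖ₑ ≤
      C * screenedSeminorm N s p U σ h + volume B * ∫⁻ x in A, ‖h x‖ₑ := by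
    calc volume A * ∫⁻ y in B, ‖h y‖ₑ = ∫⁻ x in A, ∫⁻ y in B, ‖h y‖ₑ := by
          rw [setLIntegral_const, mul_comm]
      _ ≤ ∫⁻ x in A, ((∫⁻ y in B, ‖h y - h x‖ₑ) + volume B * ‖h x‖ₑ) := by
          apply lintegral_mono
          intro x
          calc ∫⁻ y in B, ‖h y‖ₑ ≤ ∫⁻ y in B, (‖h y - h x‖ₑ + ‖h x‖ₑ) := by
                apply lintegral_mono
                intro y
                have := enorm_add_le (h y - h x) (h x)
                simpa using this
            _ = _ := by
                rw [lintegral_add_right _ measurable_const, setLIntegral_const, mul_comm]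
      _ = (∫⁻ x in A, ∫⁻ y in B, ‖h y - h x‖ₑ) + volume B * ∫⁻ x in A, ‖h x‖ₑ := by
          rw [lintegral_add_right' _ ((hh.mono_set hAU).enorm.const_mul _),
            lintegral_const_mul' _ _ hBf]
      _ ≤ _ := by gcongr; exact hb h hh
  calc ∫⁻ y in B, ‖h y‖ₑ = (volume A)⁻¹ * (volume A * ∫⁻ y in B, ‖h y‖ₑ) := by
        rw [← mul_assoc, ENNReal.inv_mul_cancel hA0 hAf, one_mul]
    _ ≤ (volume A)⁻¹ * (C * screenedSeminorm N s p U σ h + volume B * ∫⁻ x in A, ‖h x‖ₑ) := by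
        gcongr
    _ ≤ (volume A)⁻¹ * ((C + volume B) * (screenedSeminorm N s p U σ h + ∫⁻ x in A, ‖h x‖ₑ)) := by
        gcongr
        rw [add_mul, mul_add, mul_add]
        gcongr
        · exact le_self_add
        · exact le_add_self
    _ = _ := by ring

lemma avg_bound {N : ℕ} {s p : ℝ} (hp : 1 ≤ p) (hs0 : 0 < s) {U : Set (EE N)}
    {σ : EE N → ℝ≥0∞} (hU : IsOpen U) (hσ : LowerSemicontinuousOn σ U)
    {A : Set (EE N)} (hA : MeasurableSet A) (hAU : A ⊆ U)
    (hA0 : volume A ≠ 0)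
    (hAf : volume A ≠ ⊤) {R : ℝ} (hR : ∀ x ∈ A, ∀ y ∈ A, dist y x ≤ R)
    (hAB : A ×ˢ A ⊆ DD U σ) :
    ∃ C : ℝ≥0∞, C ≠ ⊤ ∧ ∀ h : EE N → ℝ, AEStronglyMeasurable h (volume.restrict U) →
      IntegrableOn h A →
      ∫⁻ y in A, ‖h y - ⨍ x in A, h x‖ₑ ≤ C * screenedSeminorm N s p U σ h := by
  obtain ⟨C, hC, hb⟩ := rect_bound2 hp hs0 hU hσ hA hA hAU hAU hAf hAf hR (Or.inl hAB)
  refine ⟨(volume A)⁻¹ * C, ENNReal.mul_ne_top (ENNReal.inv_ne_top.2 hA0) hC, fun h hh hi => ?_⟩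
  have hr : volume.real A ≠ 0 := by
    rw [Measure.real, ENNReal.toReal_ne_zero]; exact ⟨hA0, hAf⟩
  have hre : ‖(volume.real A)⁻¹‖ₑ = (volume A)⁻¹ := by
    rw [enorm_inv hr, Real.enorm_of_nonneg measureReal_nonneg, Measure.real,
      ENNReal.ofReal_toReal hAf]
  calc ∫⁻ y in A, ‖h y - ⨍ x in A, h x‖ₑ
      ≤ ∫⁻ y in A, (volume A)⁻¹ * ∫⁻ x in A, ‖h x - h y‖ₑ := by
        apply lintegral_mono
        intro y
        have : h y - ⨍ x in A, h x = - ((volume.real A)⁻¹ * ∫ x in A, (h x - h y)) := by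
          rw [integral_sub hi (integrableOn_const hAf), setAverage_eq, setIntegral_const]
          simp only [smul_eq_mul]
          field_simp
          ring
        dsimp only
        rw [this, enorm_neg, enorm_mul, hre]
        gcongr
        exact enorm_integral_le_lintegral_enorm _
    _ = (volume A)⁻¹ * ∫⁻ y in A, ∫⁻ x in A, ‖h x - h y‖ₑ :=
        lintegral_const_mul' _ _ (ENNReal.inv_ne_top.2 hA0)
    _ ≤ (volume A)⁻¹ * (C * screenedSeminorm N s p U σ h) := by gcongr; exact hb h hh
    _ = _ := by ring

lemma seminorm_congr {N : ℕ} {s p : ℝ} (hp : 1 ≤ p) (hs0 : 0 < s) {U : Set (EE N)} (hU : IsOpen U)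
    {σ : EE N → ℝ≥0∞} (hσ : LowerSemicontinuousOn σ U) {f g : EE N → ℝ}
    (hf : AEStronglyMeasurable f (volume.restrict U))
    (hg : AEStronglyMeasurable g (volume.restrict U))
    (h : ∀ z ∈ DD U σ, dif f z = dif g z) :
    screenedSeminorm N s p U σ f = screenedSeminorm N s p U σ g := by
  rw [seminorm_eq hp hs0 hU hσ hf, seminorm_eq hp hs0 hU hσ hg]
  apply eLpNorm_congr_ae
  filter_upwards [nu_ae_mem s p hU hσ] with z hz using h z hz

lemma exists_norm {N : ℕ} {s p : ℝ} (hp : 1 ≤ p) (hs0 : 0 < s) {U : Set (EE N)} (hU : IsOpen U)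
    {σ : EE N → ℝ≥0∞} (hσ : LowerSemicontinuousOn σ U) (hσpos : ∀ x ∈ U, 0 < σ x) :
    ∃ κ : (EE N → ℝ) → EE N → ℝ,
      (∀ f, ContinuousOn (κ f) U) ∧
      (∀ f, ∀ z ∈ DD U σ, κ f z.1 = κ f z.2) ∧
      (∀ f g, LocallyIntegrableOn f U → LocallyIntegrableOn g U → ∀ x ∈ U,
        κ (fun y => f y - g y) x = κ f x - κ g x) ∧
      (∀ x ∈ U, ∃ V ∈ nhds x, ∃ C : ℝ≥0∞, C ≠ ⊤ ∧ IsOpen V ∧ V ⊆ U ∧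
        ∀ f, LocallyIntegrableOn f U →
          ∫⁻ y in V, ‖f y - κ f y‖ₑ ≤ C * screenedSeminorm N s p U σ f) := by
  have hDo := isOpen_DD hU hσ
  have hρ : ∀ x, ∃ r : ℝ, x ∈ U → 0 < r ∧ closedBall x r ⊆ U ∧ ball x r ×ˢ ball x r ⊆ DD U σ := by
    intro x
    by_cases hx : x ∈ U
    · obtain ⟨r1, h1, h1'⟩ := Metric.nhds_basis_closedBall.mem_iff.1 (hU.mem_nhds hx)
      have hm : (x, x) ∈ DD U σ := ⟨hx, hx, by simpa using hσpos x hx⟩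
      obtain ⟨r2, h2, h2'⟩ := Metric.isOpen_iff.1 hDo _ hm
      rw [← ball_prod_same] at h2'
      refine ⟨min r1 r2, fun _ => ⟨lt_min h1 h2, ?_, ?_⟩⟩
      · exact (closedBall_subset_closedBall (min_le_left _ _)).trans h1'
      · refine (Set.prod_mono ?_ ?_).trans h2' <;> exact ball_subset_ball (min_le_right _ _)
    · exact ⟨0, fun h => absurd h hx⟩
  choose ρ hρ using hρ
  let R : EE N → EE N → Prop := fun x y => (x, y) ∈ DD U σ
  let rep : EE N → EE N := fun x => (Quot.mk R x).out
  have hrepR : ∀ x y, R x y → rep x = rep y := fun x y h => by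
    simp only [rep]; rw [Quot.sound h]
  have hrep : ∀ x, Relation.EqvGen R (rep x) x := fun x =>
    Quot.eqvGen_exact (Quot.out_eq (Quot.mk R x))
  have hreprep : ∀ x, rep (rep x) = rep x := fun x => by
    simp only [rep]; rw [Quot.out_eq]
  have hball : ∀ x ∈ U, ∀ y ∈ ball x (ρ x), rep y = rep x := fun x hx y hy =>
    (hrepR x y ((hρ x hx).2.2 ⟨mem_ball_self (hρ x hx).1, hy⟩)).symm
  have hUU : ∀ x y, Relation.EqvGen R x y → (x ∈ U ↔ y ∈ U) := by
    intro x y h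
    induction h with
    | rel x y h => exact ⟨fun _ => h.2.1, fun _ => h.1⟩
    | refl => rfl
    | symm _ _ _ ih => exact ih.symm
    | trans _ _ _ _ _ i1 i2 => exact i1.trans i2
  have hrepU : ∀ x ∈ U, rep x ∈ U := fun x hx => (hUU _ _ (hrep x)).2 hx
  have hint : ∀ x ∈ U, ∀ f : EE N → ℝ, LocallyIntegrableOn f U → IntegrableOn f (ball x (ρ x)) volume :=
    fun x hx f hf => ((hf.mono_set (hρ x hx).2.1).integrableOn_isCompact
      (isCompact_closedBall _ _)).mono_set ball_subset_closedBall
  let κ : (EE N → ℝ) → EE N → ℝ := fun f x => ⨍ y in ball (rep x) (ρ (rep x)), f y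
  have hκ : ∀ f, ContinuousOn (κ f) U := by
    intro f x hx
    apply ContinuousAt.continuousWithinAt
    have : κ f =ᶠ[nhds x] fun _ => κ f x := by
      filter_upwards [ball_mem_nhds x (hρ x hx).1] with y hy
      simp only [κ]; rw [hball x hx y hy]
    exact continuousAt_const.congr this.symm
  have hκD : ∀ f, ∀ z ∈ DD U σ, κ f z.1 = κ f z.2 := by
    intro f z hz
    simp only [κ]; rw [hrepR z.1 z.2 hz]
  have hmeas : ∀ f, LocallyIntegrableOn f U →
      AEStronglyMeasurable (fun y => f y - κ f y) (volume.restrict U) := fun f hf =>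
    hf.aestronglyMeasurable.sub ((hκ f).aestronglyMeasurable hU.measurableSet)
  have hS : ∀ f, LocallyIntegrableOn f U → screenedSeminorm N s p U σ (fun y => f y - κ f y) =
      screenedSeminorm N s p U σ f := fun f hf => by
    apply seminorm_congr hp hs0 hU hσ (hmeas f hf) hf.aestronglyMeasurable
    intro z hz
    simp only [dif]
    rw [hκD f z hz]; ring
  let P : EE N → Prop := fun x => ∃ V ∈ nhds x, ∃ C : ℝ≥0∞, C ≠ ⊤ ∧ IsOpen V ∧ V ⊆ U ∧
        ∀ f, LocallyIntegrableOn f U →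
          ∫⁻ y in V, ‖f y - κ f y‖ₑ ≤ C * screenedSeminorm N s p U σ f
  have hstep : ∀ x ∈ U, ∀ y ∈ U, ((x, y) ∈ DD U σ ∨ (y, x) ∈ DD U σ) → P x → P y := by
    rintro x hx y hy hxy ⟨V, hV, C, hC, hVo, hVU, hb⟩
    have key : ∃ r > 0, ball x r ⊆ V ∧ ball y r ⊆ U ∧
        (ball x r ×ˢ ball y r ⊆ DD U σ ∨ ball y r ×ˢ ball x r ⊆ DD U σ) := by
      obtain ⟨r1, h1, h1'⟩ := Metric.mem_nhds_iff.1 hV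
      obtain ⟨r3, h3, h3'⟩ := Metric.isOpen_iff.1 hU y hy
      have h2 : ∃ r > 0, (ball x r ×ˢ ball y r ⊆ DD U σ ∨ ball y r ×ˢ ball x r ⊆ DD U σ) := by
        rcases hxy with h | h
        · obtain ⟨r2, h2, h2'⟩ := Metric.isOpen_iff.1 hDo _ h
          rw [← ball_prod_same] at h2'
          exact ⟨r2, h2, Or.inl h2'⟩
        · obtain ⟨r2, h2, h2'⟩ := Metric.isOpen_iff.1 hDo _ h
          rw [← ball_prod_same] at h2'
          exact ⟨r2, h2, Or.inr h2'⟩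
      obtain ⟨r2, h2, h2'⟩ := h2
      refine ⟨min r1 (min r2 r3), lt_min h1 (lt_min h2 h3),
        (ball_subset_ball (min_le_left _ _)).trans h1',
        (ball_subset_ball ((min_le_right _ _).trans (min_le_right _ _))).trans h3', ?_⟩
      have hr : min r1 (min r2 r3) ≤ r2 := (min_le_right _ _).trans (min_le_left _ _)
      refine h2'.imp (fun h => ?_) (fun h => ?_) <;>
      exact (Set.prod_mono (ball_subset_ball hr) (ball_subset_ball hr)).trans h
    obtain ⟨r, hr, hrV, hrU, hrD⟩ := key
    have hR : ∀ a ∈ ball x r, ∀ b ∈ ball y r, dist b a ≤ r + dist y x + r := by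
      intro a ha b hb
      rw [mem_ball] at ha hb
      have h1 := dist_triangle b y a
      have h2 := dist_triangle y x a
      rw [dist_comm x a] at h2
      linarith
    obtain ⟨C', hC', hb'⟩ := prop_bound hp hs0 hU hσ (measurableSet_ball (x := x) (ε := r))
      (measurableSet_ball (x := y) (ε := r)) (hrV.trans hVU) hrU
      (measure_ball_pos volume x hr).ne' measure_ball_lt_top.ne measure_ball_lt_top.ne hR hrD
    refine ⟨ball y r, ball_mem_nhds y hr, C' * (1 + C),
      ENNReal.mul_ne_top hC' (ENNReal.add_ne_top.2 ⟨ENNReal.one_ne_top, hC⟩), isOpen_ball, hrU,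
      fun f hf => ?_⟩
    have := hb' _ (hmeas f hf)
    rw [hS f hf] at this
    calc _ ≤ _ := this
      _ ≤ C' * (screenedSeminorm N s p U σ f + C * screenedSeminorm N s p U σ f) := by
        gcongr
        exact (lintegral_mono_set hrV).trans (hb f hf)
      _ = _ := by ring
  have hPP : ∀ x y, Relation.EqvGen R x y → (P x ↔ P y) := by
    intro x y h
    induction h with
    | rel x y h => exact ⟨hstep x h.1 y h.2.1 (Or.inl h), hstep y h.2.1 x h.1 (Or.inr h)⟩
    | refl => rfl
    | symm _ _ _ ih => exact ih.symm
    | trans _ _ _ _ _ i1 i2 => exact i1.trans i2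
  refine ⟨κ, hκ, hκD, ?_, ?_⟩
  · intro f g hf hg x hx
    simp only [κ]
    rw [setAverage_eq, setAverage_eq, setAverage_eq, integral_sub (hint _ (hrepU x hx) f hf)
      (hint _ (hrepU x hx) g hg), smul_sub]
  · intro x hx
    refine (hPP _ _ (hrep x)).1 ?_
    have hx' := hrepU x hx
    obtain ⟨h1, h2, h3⟩ := hρ _ hx'
    have hR : ∀ a ∈ ball (rep x) (ρ (rep x)), ∀ b ∈ ball (rep x) (ρ (rep x)),
        dist b a ≤ ρ (rep x) + ρ (rep x) := by
      intro a ha b hb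
      rw [mem_ball] at ha hb
      have h1 := dist_triangle_right b a (rep x)
      linarith
    have hsub := ball_subset_closedBall.trans h2
    obtain ⟨C, hC, hb⟩ := avg_bound hp hs0 hU hσ measurableSet_ball
      hsub (measure_ball_pos volume _ h1).ne' measure_ball_lt_top.ne hR h3
    refine ⟨_, ball_mem_nhds _ h1, C, hC, isOpen_ball, hsub, fun f hf => ?_⟩
    refine le_trans (le_of_eq ?_) (hb f hf.aestronglyMeasurable (hint _ hx' f hf))
    apply setLIntegral_congr_fun measurableSet_ball
    intro y hy
    simp only [κ]
    rw [hball _ hx' y hy, hreprep]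

/-- Sequential completeness of the screened space `W̃^{s,p}_{(σ)}(U)`
(the set of `f ∈ L¹_loc(U)` with finite screened seminorm) with respect to its
seminorm: every Cauchy sequence converges in seminorm to an element of the space. -/
theorem statement8 (N : ℕ) (U : Set (EuclideanSpace ℝ (Fin N))) (hU : IsOpen U)
    (p s : ℝ) (hp : 1 ≤ p) (hs0 : 0 < s) (hs1 : s < 1)
    (σ : EuclideanSpace ℝ (Fin N) → ℝ≥0∞)
    (hσlsc : LowerSemicontinuousOn σ U) (hσpos : ∀ x ∈ U, 0 < σ x)
    (f : ℕ → EuclideanSpace ℝ (Fin N) → ℝ)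
    (hmem : ∀ n, LocallyIntegrableOn (f n) U ∧ screenedSeminorm N s p U σ (f n) < ⊤)
    (hcauchy : ∀ ε : ℝ≥0∞, 0 < ε → ∃ M : ℕ, ∀ n ≥ M, ∀ m ≥ M,
      screenedSeminorm N s p U σ (fun y => f n y - f m y) < ε) :
    ∃ g : EuclideanSpace ℝ (Fin N) → ℝ,
      LocallyIntegrableOn g U ∧ screenedSeminorm N s p U σ g < ⊤ ∧
      Tendsto (fun n => screenedSeminorm N s p U σ (fun y => f n y - g y))
        atTop (nhds 0) := by
  obtain ⟨κ, hκc, hκD, hκsub, hκb⟩ := exists_norm hp hs0 hU hσlsc hσpos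
  have hli : ∀ n, LocallyIntegrableOn (f n) U := fun n => (hmem n).1
  have hP : ∀ k : ℕ, ∀ᶠ a in atTop, ∀ n ≥ a, ∀ m ≥ a,
      screenedSeminorm N s p U σ (fun y => f n y - f m y) < (2 : ℝ≥0∞)⁻¹ ^ k := by
    intro k
    obtain ⟨M, hM⟩ := hcauchy ((2 : ℝ≥0∞)⁻¹ ^ k) (by simp [pos_iff_ne_zero])
    filter_upwards [eventually_ge_atTop M] with a ha n hn m hm
    exact hM n (ha.trans hn) m (ha.trans hm)
  obtain ⟨φ, hφ, hφb⟩ := extraction_forall_of_eventually hP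
  let u : ℕ → EE N → ℝ := fun k x => f (φ k) x - κ (f (φ k)) x
  have hum : ∀ k, LocallyIntegrableOn (u k) U := fun k =>
    (hli _).sub ((hκc _).locallyIntegrableOn hU.measurableSet)
  have hub : ∀ (V : Set (EE N)) (C : ℝ≥0∞), MeasurableSet V → V ⊆ U →
      (∀ g, LocallyIntegrableOn g U →
        ∫⁻ y in V, ‖g y - κ g y‖ₑ ≤ C * screenedSeminorm N s p U σ g) →
      ∀ k l, k ≤ l → ∫⁻ y in V, ‖u k y - u l y‖ₑ ≤ C * (2 : ℝ≥0∞)⁻¹ ^ k := by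
    intro V C hVm hVU hb k l hkl
    refine le_trans (le_of_eq ?_) ((hb _ ((hli (φ k)).sub (hli (φ l)))).trans ?_)
    · apply setLIntegral_congr_fun hVm
      intro y hy
      have := hκsub _ _ (hli (φ k)) (hli (φ l)) y (hVU hy)
      change ‖u k y - u l y‖ₑ = ‖(f (φ k) y - f (φ l) y) - κ (fun y => f (φ k) y - f (φ l) y) y‖ₑ
      rw [this]
      simp only [u]
      congr 1; ring
    · gcongr
      exact (hφb k _ le_rfl _ (hφ.monotone hkl)).le
  let g : EE N → ℝ := fun x => limUnder atTop (fun k => u k x)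
  have hgV : ∀ x ∈ U, ∃ V ∈ nhds x, ∃ C : ℝ≥0∞, C ≠ ⊤ ∧ IsOpen V ∧ V ⊆ U ∧
      (∀ k l, k ≤ l → ∫⁻ y in V, ‖u k y - u l y‖ₑ ≤ C * (2 : ℝ≥0∞)⁻¹ ^ k) ∧
      ∀ᵐ y ∂(volume.restrict V), Tendsto (fun k => u k y) atTop (nhds (g y)) := by
    intro x hx
    obtain ⟨V, hV, C, hC, hVo, hVU, hb⟩ := hκb x hx
    have hb' := hub V C hVo.measurableSet hVU hb
    refine ⟨V, hV, C, hC, hVo, hVU, hb', ?_⟩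
    have hm : ∀ k, AEMeasurable (fun y => ‖u k y - u (k + 1) y‖ₑ) (volume.restrict V) := fun k =>
      (((hum k).sub (hum (k + 1))).aestronglyMeasurable.mono_set hVU).enorm
    have hfin : ∫⁻ y in V, ∑' k, ‖u k y - u (k + 1) y‖ₑ ≠ ⊤ := by
      rw [lintegral_tsum hm]
      refine ne_top_of_le_ne_top ?_ (ENNReal.tsum_le_tsum fun k => hb' k (k + 1) (Nat.le_succ k))
      rw [ENNReal.tsum_mul_left, ENNReal.tsum_geometric]
      apply ENNReal.mul_ne_top hC
      simp
    filter_upwards [ae_lt_top' (AEMeasurable.tsum hm) hfin] with y hy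
    have hc : CauchySeq (fun k => u k y) := by
      apply cauchySeq_of_edist_le_of_tsum_ne_top (fun k => ‖u k y - u (k + 1) y‖ₑ) _ hy.ne
      intro n
      rw [edist_eq_enorm_sub]
    exact hc.tendsto_limUnder
  have hlim : ∀ᵐ y ∂(volume.restrict U), Tendsto (fun k => u k y) atTop (nhds (g y)) := by
    rw [ae_restrict_iff' hU.measurableSet, ae_iff]
    apply measure_null_of_locally_null
    intro x hx
    have hxU : x ∈ U := by
      by_contra h
      exact hx (fun h' => absurd h' h)
    obtain ⟨V, hV, C, hC, hVo, hVU, -, hb⟩ := hgV x hxU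
    rw [ae_restrict_iff' hVo.measurableSet, ae_iff] at hb
    refine ⟨{a | ¬(a ∈ U → Tendsto (fun k => u k a) atTop (nhds (g a)))} ∩ V,
      inter_mem_nhdsWithin _ hV, measure_mono_null ?_ hb⟩
    rintro a ⟨ha, haV⟩ h
    exact ha (fun _ => h haV)
  have hgm : AEStronglyMeasurable g (volume.restrict U) :=
    aestronglyMeasurable_of_tendsto_ae atTop (fun k => (hum k).aestronglyMeasurable) hlim
  have hgl : LocallyIntegrableOn g U := by
    intro x hx
    obtain ⟨V, hV, C, hC, hVo, hVU, hb, hl⟩ := hgV x hx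
    have hi : IntegrableOn (fun y => u 0 y - g y) V := by
      refine ⟨((hum 0).aestronglyMeasurable.sub hgm).mono_set hVU, ?_⟩
      rw [hasFiniteIntegral_iff_enorm]
      have h1 := Lp.eLpNorm_lim_le_liminf_eLpNorm (p := 1) (μ := volume.restrict V)
        (f := fun k y => u 0 y - u k y)
        (fun k => (((hum 0).sub (hum k)).aestronglyMeasurable.mono_set hVU)) (fun y => u 0 y - g y)
        (by filter_upwards [hl] with y hy using tendsto_const_nhds.sub hy)
      rw [eLpNorm_one_eq_lintegral_enorm] at h1
      refine lt_of_le_of_lt h1 (lt_of_le_of_lt ?_ hC.lt_top)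
      refine liminf_le_of_frequently_le' (Frequently.of_forall fun k => ?_)
      rw [eLpNorm_one_eq_lintegral_enorm]
      simpa using hb 0 k (Nat.zero_le k)
    obtain ⟨W, hW, hWi⟩ := hum 0 x hx
    refine ⟨W ∩ V, inter_mem hW (mem_nhdsWithin_of_mem_nhds hV), ?_⟩
    have := (hWi.mono_set (Set.inter_subset_left (t := V))).sub
      (hi.mono_set (Set.inter_subset_right (s := W)))
    refine this.congr (Eventually.of_forall fun y => ?_)
    simp
  have hfg : ∀ n, AEStronglyMeasurable (fun y => f n y - g y) (volume.restrict U) := fun n =>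
    (hli n).aestronglyMeasurable.sub hgm
  have hff : ∀ n m, AEStronglyMeasurable (fun y => f n y - f m y) (volume.restrict U) :=
    fun n m => (hli n).aestronglyMeasurable.sub (hli m).aestronglyMeasurable
  have hnl : ∀ᵐ z ∂(nu N s p U σ), Tendsto (fun k => u k z.1) atTop (nhds (g z.1)) ∧
      Tendsto (fun k => u k z.2) atTop (nhds (g z.2)) := by
    apply (nu_ac s p U σ).ae_le
    filter_upwards [Measure.quasiMeasurePreserving_fst.ae hlim,
      Measure.quasiMeasurePreserving_snd.ae hlim] with z h1 h2 using ⟨h1, h2⟩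
  have hfatou : ∀ n, screenedSeminorm N s p U σ (fun y => f n y - g y) ≤
      liminf (fun k => screenedSeminorm N s p U σ (fun y => f n y - f (φ k) y)) atTop := by
    intro n
    rw [seminorm_eq hp hs0 hU hσlsc (hfg n)]
    simp_rw [fun k => seminorm_eq hp hs0 hU hσlsc (hff n (φ k))]
    apply Lp.eLpNorm_lim_le_liminf_eLpNorm (fun k => aesm_dif s p σ (hff n (φ k)))
    filter_upwards [hnl, nu_ae_mem s p hU hσlsc] with z hz hzD
    have h1 : Tendsto (fun k => (f n z.2 - u k z.2) - (f n z.1 - u k z.1)) atTop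
        (nhds ((f n z.2 - g z.2) - (f n z.1 - g z.1))) :=
      (tendsto_const_nhds.sub hz.2).sub (tendsto_const_nhds.sub hz.1)
    refine h1.congr fun k => ?_
    simp only [dif, u]
    rw [hκD _ z hzD]; ring
  have hT : Tendsto (fun n => screenedSeminorm N s p U σ (fun y => f n y - g y)) atTop (nhds 0) := by
    rw [ENNReal.tendsto_nhds_zero]
    intro ε hε
    obtain ⟨M, hM⟩ := hcauchy ε hε
    filter_upwards [eventually_ge_atTop M] with n hn
    refine (hfatou n).trans ?_
    refine liminf_le_of_frequently_le' (Eventually.frequently ?_)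
    filter_upwards [hφ.tendsto_atTop.eventually_ge_atTop M] with k hk
    exact (hM n hn _ hk).le
  refine ⟨g, hgl, ?_, hT⟩
  obtain ⟨n, hn⟩ := ((ENNReal.tendsto_nhds_zero.1 hT) 1 one_pos).exists
  have e : dif g = dif (f n) - dif (fun y => f n y - g y) := by
    ext z; simp only [dif, Pi.sub_apply]; ring
  have hn2 := (hmem n).2
  rw [seminorm_eq hp hs0 hU hσlsc (hli n).aestronglyMeasurable] at hn2
  rw [seminorm_eq hp hs0 hU hσlsc (hfg n)] at hn
  rw [seminorm_eq hp hs0 hU hσlsc hgm, e]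
  refine lt_of_le_of_lt (eLpNorm_sub_le (aesm_dif s p σ (hli n).aestronglyMeasurable)
    (aesm_dif s p σ (hfg n)) (by simpa using hp)) ?_
  exact ENNReal.add_lt_top.2 ⟨hn2, lt_of_le_of_lt hn ENNReal.one_lt_top⟩
end

section
/- Let 1 ≤ p < ∞, let Γ ⊆ 𝕊^{N−1} satisfy 𝓗^{N−1}(Γ) > 0, let ρ ≥ 0, and set K_{Γ,ρ} = {x ∈ ℝ^N : ρ < |x| and x/|x| ∈ Γ}. Suppose U ⊆ ℝ^N is open with K_{Γ,ρ} ⊆ U. Then there exists a function u ∈ L¹_loc(U) such that for every s ∈ (0,1): |u|_{W̃^{s,p}_{(1)}(U)} < ∞ and |u|_{Ẇ^{s,p}(U)} = ∞. In particular, for every 0 < s < 1 the inclusion Ẇ^{s,p}(U) ⊊ W̃^{s,p}_{(1)}(U) is strict. -/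
open MeasureTheory Metric
open scoped ENNReal

lemma aux_normalize_lip {E : Type*} [NormedAddCommGroup E] [NormedSpace ℝ E] (x y : E) (a : ℝ)
    (ha : 0 < a) (hx : a ≤ ‖x‖) (hy : a ≤ ‖y‖) :
    dist (‖x‖⁻¹ • x) (‖y‖⁻¹ • y) ≤ (2 / a) * dist x y := by
  have hx0 : 0 < ‖x‖ := ha.trans_le hx
  have hy0 : 0 < ‖y‖ := ha.trans_le hy
  have h1 : ‖x‖⁻¹ • x - ‖y‖⁻¹ • y = ‖x‖⁻¹ • (x - y) + (‖x‖⁻¹ - ‖y‖⁻¹) • y := by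
    rw [smul_sub, sub_smul]; abel
  have h2 : ‖(‖x‖⁻¹ - ‖y‖⁻¹) • y‖ = ‖x‖⁻¹ * |‖y‖ - ‖x‖| := by
    rw [norm_smul, Real.norm_eq_abs]
    have : ‖x‖⁻¹ - ‖y‖⁻¹ = ‖x‖⁻¹ * (‖y‖ - ‖x‖) * ‖y‖⁻¹ := by field_simp
    rw [this, abs_mul, abs_mul, abs_of_pos (inv_pos.2 hx0), abs_of_pos (inv_pos.2 hy0)]
    field_simp
  have h3 : |‖y‖ - ‖x‖| ≤ ‖x - y‖ := by
    rw [← norm_neg (x - y), neg_sub]; exact abs_norm_sub_norm_le y x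
  have h4 : ‖x‖⁻¹ ≤ a⁻¹ := inv_anti₀ ha hx
  rw [dist_eq_norm, dist_eq_norm, h1]
  calc _ ≤ ‖‖x‖⁻¹ • (x - y)‖ + ‖(‖x‖⁻¹ - ‖y‖⁻¹) • y‖ := norm_add_le _ _
    _ = ‖x‖⁻¹ * ‖x - y‖ + ‖x‖⁻¹ * |‖y‖ - ‖x‖| := by
        rw [h2, norm_smul, norm_inv, norm_norm]
    _ ≤ a⁻¹ * ‖x - y‖ + a⁻¹ * ‖x - y‖ := by gcongr
    _ = _ := by ring

lemma aux_cone_half (n : ℕ) (Γ : Set (EuclideanSpace ℝ (Fin (n + 1))))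
    (hΓ : Γ ⊆ Metric.sphere 0 1)
    (hK : volume {x : EuclideanSpace ℝ (Fin (n + 1)) | x ≠ 0 ∧ ‖x‖⁻¹ • x ∈ Γ} = 0)
    (i : Fin (n + 1)) (δ : ℝ) (hδ : δ ≠ 0) :
    μH[(n : ℝ)] (Γ ∩ {x | 0 < δ * x i}) = 0 := by
  set K := {x : EuclideanSpace ℝ (Fin (n + 1)) | x ≠ 0 ∧ ‖x‖⁻¹ • x ∈ Γ} with hKdef
  have mp1 := (volume_preserving_piFinSuccAbove (fun _ : Fin (n + 1) => ℝ) i).symm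
  have mp := (PiLp.volume_preserving_toLp (Fin (n + 1))).comp mp1
  have h0 := mp.quasiMeasurePreserving.preimage_null hK
  have h1 := Measure.measure_ae_null_of_prod_null h0
  obtain ⟨t, ht, hSt⟩ : ∃ t : ℝ, 0 < δ * t ∧
      volume {w : Fin n → ℝ | WithLp.toLp 2 (i.insertNth t w) ∈ K} = 0 := by
    by_contra hcon
    push Not at hcon
    have hop : IsOpen {t : ℝ | 0 < δ * t} := isOpen_lt continuous_const (by fun_prop)
    have hpos : 0 < volume {t : ℝ | 0 < δ * t} := by
      refine hop.measure_pos volume ⟨δ, ?_⟩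
      simpa using mul_self_pos.2 hδ
    refine hpos.ne' (measure_mono_null ?_ h1)
    intro t ht
    exact hcon t ht
  have ht0 : t ≠ 0 := by rintro rfl; simp at ht
  set S := {w : Fin n → ℝ | WithLp.toLp 2 (i.insertNth t w) ∈ K} with hS
  set emb : (Fin n → ℝ) → EuclideanSpace ℝ (Fin (n + 1)) :=
    fun w => WithLp.toLp 2 (i.insertNth (α := fun _ => ℝ) t w) with hemb
  have hSH : μH[(n : ℝ)] S = 0 := by
    have := hausdorffMeasure_pi_real (ι := Fin n)
    rw [Fintype.card_fin] at this
    rw [this]; exact hSt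
  have hnorm : ∀ w, |t| ≤ ‖emb w‖ := by
    intro w
    have := PiLp.norm_apply_le (emb w) i
    simpa [hemb] using this
  have hl1 : LipschitzWith 1 (fun w : Fin n → ℝ => i.insertNth (α := fun _ => ℝ) t w) := by
    refine LipschitzWith.of_dist_le_mul fun v w => ?_
    rw [NNReal.coe_one, one_mul]
    refine (dist_pi_le_iff dist_nonneg).2 fun j => ?_
    refine Fin.succAboveCases i ?_ (fun k => ?_) j
    · simp
    · simpa using dist_le_pi_dist v w k
  have hl2 := (PiLp.lipschitzWith_toLp 2 (fun _ : Fin (n + 1) => ℝ)).comp hl1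
  set C := ((Fintype.card (Fin (n+1)) : NNReal) ^ (1 / (2:ℝ≥0∞)).toReal) * 1 with hC
  have hl3 : LipschitzWith ((Real.toNNReal (2 / |t|)) * C) (fun w => ‖emb w‖⁻¹ • emb w) := by
    refine LipschitzWith.of_dist_le_mul fun v w => ?_
    refine (aux_normalize_lip _ _ |t| (abs_pos.2 ht0) (hnorm v) (hnorm w)).trans ?_
    rw [NNReal.coe_mul, Real.coe_toNNReal _ (by positivity), mul_assoc]
    gcongr
    exact hl2.dist_le_mul v w
  have him := (hl3.lipschitzOnWith (s := S)).hausdorffMeasure_image_le (d := (n : ℝ)) (by positivity)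
  rw [hSH, mul_zero] at him
  refine measure_mono_null ?_ (le_antisymm him bot_le)
  rintro x ⟨hxΓ, hx⟩
  have hx1 : ‖x‖ = 1 := by simpa using hΓ hxΓ
  have hxi : x i ≠ 0 := by intro h; simp [h] at hx
  have hlam : 0 < t / x i := by
    have : t / x i = (δ * t) / (δ * x i) := by field_simp
    rw [this]; exact div_pos ht hx
  have hpt : emb (fun j => (t / x i) * x (i.succAbove j)) = (t / x i) • x := by
    ext j
    refine Fin.succAboveCases i ?_ (fun k => ?_) j
    · simp [hemb]; field_simp
    · simp [hemb]
  have hnl : ‖(t / x i) • x‖⁻¹ • (t / x i) • x = x := by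
    rw [norm_smul, hx1, mul_one, Real.norm_eq_abs, abs_of_pos hlam, smul_smul,
      inv_mul_cancel₀ hlam.ne', one_smul]
  refine ⟨fun j => (t / x i) * x (i.succAbove j), ?_, ?_⟩
  · change emb _ ∈ K
    rw [hpt]
    refine ⟨?_, ?_⟩
    · refine smul_ne_zero hlam.ne' ?_
      rintro rfl; simp at hx1
    · rw [hnl]; exact hxΓ
  · simp only []
    rw [hpt, hnl]

lemma aux_cone_pos (n : ℕ) (Γ : Set (EuclideanSpace ℝ (Fin (n + 1))))
    (hΓ : Γ ⊆ Metric.sphere 0 1) (hpos : 0 < μH[(n : ℝ)] Γ) :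
    volume {x : EuclideanSpace ℝ (Fin (n + 1)) | x ≠ 0 ∧ ‖x‖⁻¹ • x ∈ Γ} ≠ 0 := by
  intro hK
  refine hpos.ne' ?_
  have : Γ ⊆ ⋃ i : Fin (n + 1), (Γ ∩ {x | 0 < (1:ℝ) * x i}) ∪ (Γ ∩ {x | 0 < (-1:ℝ) * x i}) := by
    intro x hx
    have hx1 : ‖x‖ = 1 := by simpa using hΓ hx
    have : ∃ i, x i ≠ 0 := by
      by_contra h
      push Not at h
      have : x = 0 := by ext i; simp [h i]
      simp [this] at hx1
    obtain ⟨i, hi⟩ := this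
    refine Set.mem_iUnion.2 ⟨i, ?_⟩
    rcases lt_or_gt_of_ne hi with h | h
    · right; exact ⟨hx, by simpa using h⟩
    · left; exact ⟨hx, by simpa using h⟩
  refine measure_mono_null this (measure_iUnion_null fun i => measure_union_null ?_ ?_)
  · exact aux_cone_half n Γ hΓ hK i 1 one_ne_zero
  · exact aux_cone_half n Γ hΓ hK i (-1) (by norm_num)

lemma aux_shell_pos (n : ℕ) (Γ : Set (EuclideanSpace ℝ (Fin (n + 1))))
    (hΓ : Γ ⊆ Metric.sphere 0 1) (hpos : 0 < μH[(n : ℝ)] Γ) :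
    volume {x : EuclideanSpace ℝ (Fin (n + 1)) | 1 < ‖x‖ ∧ ‖x‖ ≤ 2 ∧ ‖x‖⁻¹ • x ∈ Γ} ≠ 0 := by
  intro h0
  refine aux_cone_pos n Γ hΓ hpos ?_
  set A := {x : EuclideanSpace ℝ (Fin (n + 1)) | 1 < ‖x‖ ∧ ‖x‖ ≤ 2 ∧ ‖x‖⁻¹ • x ∈ Γ} with hA
  have : {x : EuclideanSpace ℝ (Fin (n + 1)) | x ≠ 0 ∧ ‖x‖⁻¹ • x ∈ Γ} ⊆
      ⋃ k : ℤ, (fun x => ((2:ℝ) ^ k) • x) '' A := by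
    rintro x ⟨hx0, hx⟩
    have hxn : 0 < ‖x‖ := norm_pos_iff.2 hx0
    obtain ⟨k, hk1, hk2⟩ := exists_mem_Ioc_zpow hxn (one_lt_two : (1:ℝ) < 2)
    have h2 : (0:ℝ) < 2 ^ k := by positivity
    refine Set.mem_iUnion.2 ⟨k, ((2:ℝ) ^ k)⁻¹ • x, ?_, ?_⟩
    · have hn : ‖((2:ℝ) ^ k)⁻¹ • x‖ = ((2:ℝ) ^ k)⁻¹ * ‖x‖ := by
        rw [norm_smul, Real.norm_of_nonneg (by positivity)]
      refine ⟨?_, ?_, ?_⟩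
      · rw [hn, inv_mul_eq_div, lt_div_iff₀ h2]; simpa using hk1
      · rw [hn, inv_mul_eq_div, div_le_iff₀ h2]
        rw [zpow_add_one₀ two_ne_zero] at hk2; linarith
      · rw [hn, smul_smul]
        convert hx using 2
        field_simp
    · simp only [smul_smul]
      rw [mul_inv_cancel₀ h2.ne', one_smul]
  refine measure_mono_null this (measure_iUnion_null fun k => ?_)
  rw [Set.image_smul, Measure.addHaar_smul, h0, mul_zero]

noncomputable def auxV (n : ℕ) (t : ℝ) : ℝ :=
  ((max t 0 + 3) ^ (n + 1))⁻¹ / (Real.log (max t 0 + 3)) ^ 2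

lemma auxV_pos (n : ℕ) (t : ℝ) : 0 < auxV n t := by
  have h : 0 ≤ max t 0 := le_max_right _ _
  have : 0 < Real.log (max t 0 + 3) := Real.log_pos (by linarith)
  unfold auxV; positivity

lemma auxV_antitone (n : ℕ) : Antitone (auxV n) := by
  intro a b hab
  have h0 : 0 ≤ max a 0 := le_max_right _ _
  have h1 : max a 0 ≤ max b 0 := max_le_max hab le_rfl
  have h2 : 0 < Real.log (max a 0 + 3) := Real.log_pos (by linarith)
  unfold auxV
  gcongr

noncomputable def auxw (n : ℕ) (p t : ℝ) : ℝ := auxV n t ^ (1 / p)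

lemma auxw_pos (n : ℕ) (p t : ℝ) : 0 < auxw n p t := Real.rpow_pos_of_pos (auxV_pos n t) _

lemma auxw_antitone (n : ℕ) (p : ℝ) (hp : 1 ≤ p) : Antitone (auxw n p) := by
  intro a b hab
  exact Real.rpow_le_rpow (auxV_pos n b).le (auxV_antitone n hab) (by positivity)

lemma auxw_pow (n : ℕ) (p t : ℝ) (hp : 1 ≤ p) : auxw n p t ^ p = auxV n t := by
  unfold auxw
  rw [← Real.rpow_mul (auxV_pos n t).le, one_div_mul_cancel (by linarith), Real.rpow_one]

noncomputable def auxg (n : ℕ) (p r : ℝ) : ℝ := ∫ t in (0:ℝ)..r, auxw n p t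

lemma auxw_ii (n : ℕ) (p : ℝ) (hp : 1 ≤ p) (a b : ℝ) :
    IntervalIntegrable (auxw n p) volume a b :=
  (auxw_antitone n p hp).intervalIntegrable

lemma auxg_cont (n : ℕ) (p : ℝ) (hp : 1 ≤ p) : Continuous (auxg n p) :=
  intervalIntegral.continuous_primitive (auxw_ii n p hp) 0

lemma auxg_sub (n : ℕ) (p : ℝ) (hp : 1 ≤ p) (a b : ℝ) :
    auxg n p b - auxg n p a = ∫ t in a..b, auxw n p t :=
  intervalIntegral.integral_interval_sub_left (auxw_ii n p hp _ _) (auxw_ii n p hp _ _)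

lemma auxg_upper (n : ℕ) (p : ℝ) (hp : 1 ≤ p) (a b c : ℝ) (ha : c ≤ a) (hb : c ≤ b) :
    |auxg n p b - auxg n p a| ≤ auxw n p c * |b - a| := by
  rw [auxg_sub n p hp]
  rw [← Real.norm_eq_abs]
  refine intervalIntegral.norm_integral_le_of_norm_le_const fun x hx => ?_
  rw [Real.norm_of_nonneg (auxw_pos n p x).le]
  refine auxw_antitone n p hp ?_
  have := hx.1
  exact (le_min ha hb).trans this.le

lemma auxg_lower (n : ℕ) (p : ℝ) (hp : 1 ≤ p) (a b c : ℝ) (hab : a ≤ b) (hb : b ≤ c) :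
    auxw n p c * (b - a) ≤ auxg n p b - auxg n p a := by
  rw [auxg_sub n p hp]
  have : ∫ t in a..b, auxw n p c = auxw n p c * (b - a) := by simp [mul_comm]
  rw [← this]
  refine intervalIntegral.integral_mono_on hab (by simp) (auxw_ii n p hp _ _) fun x hx => ?_
  exact auxw_antitone n p hp (hx.2.trans hb)

lemma aux_int_V (n : ℕ) :
    ∫⁻ x : EuclideanSpace ℝ (Fin (n + 1)), ENNReal.ofReal (auxV n (‖x‖ - 1)) < ⊤ := by
  have hint : Integrable (fun x : EuclideanSpace ℝ (Fin (n + 1)) => auxV n (‖x‖ - 1)) := by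
    refine (integrable_fun_norm_addHaar (E := EuclideanSpace ℝ (Fin (n + 1))) volume
      (f := fun y => auxV n (y - 1))).2 ?_
    have hb : IntegrableOn (fun y : ℝ => (y + 2)⁻¹ / (Real.log (y + 2)) ^ 2) (Set.Ioi 0) := by
      have h := integrableOn_inv_div_log_sq_Ioi (c := 2) one_lt_two
      have := (measurePreserving_add_right (volume : Measure ℝ) 2).integrableOn_comp_preimage
        (measurableEmbedding_addRight 2) (f := fun t : ℝ => t⁻¹ / (Real.log t) ^ 2)
        (s := Set.Ioi 2)
      have := this.2 h
      simpa [Function.comp_def] using this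
    refine Integrable.mono' hb ?_ ?_
    · have : Measurable (fun y => auxV n (y - 1)) :=
        (auxV_antitone n).measurable.comp (by fun_prop)
      exact ((measurable_id.pow_const _).smul this).aestronglyMeasurable
    · refine (ae_restrict_iff' measurableSet_Ioi).2 (Filter.Eventually.of_forall fun y hy => ?_)
      have hy : 0 < y := hy
      have hV := auxV_pos n (y - 1)
      simp only [finrank_euclideanSpace_fin, Nat.add_sub_cancel, smul_eq_mul]
      rw [Real.norm_of_nonneg (by positivity)]
      have hm : y + 2 ≤ max (y - 1) 0 + 3 := by
        have := le_max_left (y - 1) 0; linarith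
      have hl : 0 < Real.log (y + 2) := Real.log_pos (by linarith)
      have h1 : auxV n (y - 1) ≤ ((y + 2) ^ (n + 1))⁻¹ / (Real.log (y + 2)) ^ 2 := by
        unfold auxV; gcongr
      calc y ^ n * auxV n (y - 1)
          ≤ (y + 2) ^ n * (((y + 2) ^ (n + 1))⁻¹ / (Real.log (y + 2)) ^ 2) := by
            gcongr; linarith
        _ = _ := by rw [pow_succ]; field_simp
  exact hint.lintegral_lt_top

lemma aux_int_kernel (n : ℕ) (s p : ℝ) (hp : 1 ≤ p) (hs : s < 1) :
    ∫⁻ z : EuclideanSpace ℝ (Fin (n + 1)) in {z | ‖z‖ < 1},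
      ENNReal.ofReal (‖z‖ ^ p / ‖z‖ ^ (s * p + (n + 1 : ℕ))) < ⊤ := by
  have hint : Integrable (fun z : EuclideanSpace ℝ (Fin (n + 1)) =>
      (Set.Iio (1:ℝ)).indicator (fun y => y ^ p / y ^ (s * p + (n + 1 : ℕ))) ‖z‖) := by
    refine (integrable_fun_norm_addHaar (E := EuclideanSpace ℝ (Fin (n + 1))) volume
      (f := (Set.Iio (1:ℝ)).indicator (fun y => y ^ p / y ^ (s * p + (n + 1 : ℕ))))).2 ?_
    have h1 : IntegrableOn (fun y : ℝ => y ^ (p * (1 - s) - 1)) (Set.Ioo 0 1) := by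
      rw [intervalIntegral.integrableOn_Ioo_rpow_iff one_pos]
      nlinarith
    have h2 : IntegrableOn ((Set.Iio (1:ℝ)).indicator (fun y : ℝ => y ^ (p * (1 - s) - 1)))
        (Set.Ioi 0) := by
      rw [IntegrableOn, integrable_indicator_iff measurableSet_Iio, IntegrableOn,
        Measure.restrict_restrict measurableSet_Iio, Set.inter_comm, Set.Ioi_inter_Iio]
      exact h1
    refine IntegrableOn.congr_fun h2 (fun y hy => ?_) measurableSet_Ioi
    have hy : 0 < y := hy
    by_cases hy1 : y ∈ Set.Iio (1:ℝ)
    · simp only [Set.indicator_of_mem hy1, finrank_euclideanSpace_fin, Nat.add_sub_cancel,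
        smul_eq_mul]
      rw [← Real.rpow_sub hy, ← Real.rpow_natCast, ← Real.rpow_add hy]
      congr 1; push_cast; ring
    · simp [Set.indicator_of_notMem hy1]
  have h := hint.lintegral_lt_top
  rw [← lintegral_indicator (by measurability)]
  refine lt_of_le_of_lt (lintegral_mono fun z => ?_) h
  by_cases hz : ‖z‖ < 1
  · rw [Set.indicator_of_mem (by exact hz), Set.indicator_of_mem (by exact hz)]
  · rw [Set.indicator_of_notMem (by exact hz)]; exact bot_le

lemma aux_screened (n : ℕ) (s p : ℝ) (hp : 1 ≤ p) (hs : s < 1)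
    (U : Set (EuclideanSpace ℝ (Fin (n + 1)))) :
    screenedSeminorm (n + 1) s p U (fun _ => 1) (fun x => auxg n p ‖x‖) < ⊤ := by
  unfold screenedSeminorm
  refine ENNReal.rpow_lt_top_of_nonneg (by positivity) (ne_of_lt ?_)
  set J := ∫⁻ z : EuclideanSpace ℝ (Fin (n + 1)) in {z | ‖z‖ < 1},
      ENNReal.ofReal (‖z‖ ^ p / ‖z‖ ^ (s * p + (n + 1 : ℕ))) with hJ
  have hJtop := aux_int_kernel n s p hp hs
  have inner : ∀ x : EuclideanSpace ℝ (Fin (n + 1)),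
      (∫⁻ y in U ∩ {y | edist y x < 1},
      ENNReal.ofReal (|auxg n p ‖y‖ - auxg n p ‖x‖| ^ p / dist y x ^ (s * p + (n + 1 : ℕ))))
      ≤ ENNReal.ofReal (auxV n (‖x‖ - 1)) * J := by
    intro x
    have hms : MeasurableSet {y : EuclideanSpace ℝ (Fin (n + 1)) | edist y x < 1} :=
      measurableSet_lt (by fun_prop) (by fun_prop)
    have htr : J = ∫⁻ y in {y | edist y x < 1},
        ENNReal.ofReal (‖y - x‖ ^ p / ‖y - x‖ ^ (s * p + (n + 1 : ℕ))) := by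
      rw [hJ, ← lintegral_indicator (by measurability), ← lintegral_indicator hms,
        ← lintegral_sub_right_eq_self _ x]
      congr 1; ext y
      by_cases h : ‖y - x‖ < 1
      · rw [Set.indicator_of_mem (by exact h), Set.indicator_of_mem]
        simpa [edist_eq_enorm_sub, ← ofReal_norm] using h
      · rw [Set.indicator_of_notMem (by exact h), Set.indicator_of_notMem]
        simpa [edist_eq_enorm_sub, ← ofReal_norm] using h
    rw [htr, ← lintegral_const_mul' _ _ ENNReal.ofReal_ne_top]
    refine (lintegral_mono_set Set.inter_subset_right).trans ?_
    refine setLIntegral_mono' hms fun y hy => ?_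
    have hd : ‖y - x‖ < 1 := by simpa [edist_eq_enorm_sub, ← ofReal_norm] using hy
    rw [← ENNReal.ofReal_mul (auxV_pos n _).le, dist_eq_norm]
    refine ENNReal.ofReal_le_ofReal ?_
    rw [← mul_div_assoc]
    refine div_le_div_of_nonneg_right ?_ (by positivity)
    have h1 : |‖y‖ - ‖x‖| ≤ ‖y - x‖ := abs_norm_sub_norm_le y x
    have h2 := (abs_le.1 h1).1
    have h3 := auxg_upper n p hp ‖x‖ ‖y‖ (‖x‖ - 1) (by linarith) (by linarith)
    have hw := (auxw_pos n p (‖x‖ - 1)).le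
    calc |auxg n p ‖y‖ - auxg n p ‖x‖| ^ p ≤ (auxw n p (‖x‖ - 1) * ‖y - x‖) ^ p := by
          refine Real.rpow_le_rpow (abs_nonneg _) (h3.trans ?_) (by linarith)
          gcongr
      _ = _ := by rw [Real.mul_rpow hw (norm_nonneg _), auxw_pow n p _ hp]
  have hmeasV : Measurable fun x : EuclideanSpace ℝ (Fin (n + 1)) =>
      ENNReal.ofReal (auxV n (‖x‖ - 1)) :=
    ((auxV_antitone n).measurable.comp (by fun_prop)).ennreal_ofReal
  calc _ ≤ ∫⁻ x in U, ENNReal.ofReal (auxV n (‖x‖ - 1)) * J := lintegral_mono fun x => inner x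
    _ ≤ ∫⁻ x, ENNReal.ofReal (auxV n (‖x‖ - 1)) * J := setLIntegral_le_lintegral _ _
    _ = (∫⁻ x : EuclideanSpace ℝ (Fin (n + 1)), ENNReal.ofReal (auxV n (‖x‖ - 1))) * J :=
        lintegral_mul_const _ hmeasV
    _ < ⊤ := ENNReal.mul_lt_top (aux_int_V n) hJtop

lemma aux_growth (n : ℕ) (s p ρ c M : ℝ) (hp : 1 ≤ p) (hs0 : 0 < s) (hs : s < 1) (hc : 0 < c) :
    ∃ R : ℝ, 1 ≤ R ∧ ρ ≤ R ∧
      M ≤ auxV n (8 * R) * (2 * R) ^ p / (10 * R) ^ (s * p + (n + 1 : ℕ)) *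
        ((4 * R) ^ (n + 1) * c) * (R ^ (n + 1) * c) := by
  set ε : ℝ := p * (1 - s) / 4 with hε
  have hε0 : 0 < ε := by
    have : 0 < 1 - s := by linarith
    positivity
  set κ : ℝ := ((11:ℝ) ^ (n + 1))⁻¹ * (ε ^ 2 * ((11:ℝ) ^ (2 * ε))⁻¹) *
    ((10:ℝ) ^ (s * p + (n + 1 : ℕ)))⁻¹ * c * c with hκ
  have hκ0 : 0 < κ := by positivity
  have ht : Filter.Tendsto (fun R : ℝ => κ * R ^ (2 * ε)) Filter.atTop Filter.atTop :=
    (tendsto_rpow_atTop (by positivity)).const_mul_atTop hκ0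
  obtain ⟨R, hM, h1, hρ⟩ := ((ht.eventually_ge_atTop M).and
    ((Filter.eventually_ge_atTop 1).and (Filter.eventually_ge_atTop ρ))).exists
  refine ⟨R, h1, hρ, hM.trans ?_⟩
  have hR : 0 < R := by linarith
  have hlogpos : 0 < Real.log (8 * R + 3) := Real.log_pos (by linarith)
  have hlog : Real.log (8 * R + 3) ≤ (11 * R) ^ ε / ε :=
    (Real.log_le_log (by linarith) (by linarith)).trans
      (Real.log_le_rpow_div (by positivity) hε0)
  have hV : ((11 * R) ^ (n + 1))⁻¹ / ((11 * R) ^ ε / ε) ^ 2 ≤ auxV n (8 * R) := by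
    unfold auxV
    rw [max_eq_left (by positivity)]
    gcongr
    linarith
  have h2p : R ^ p ≤ (2 * R) ^ p := Real.rpow_le_rpow hR.le (by linarith) (by linarith)
  have hN : R ^ (n + 1) ≤ (4 * R) ^ (n + 1) := by gcongr; linarith
  have hsq : ((11 * R) ^ ε) ^ 2 = (11:ℝ) ^ (2 * ε) * R ^ (2 * ε) := by
    rw [← Real.rpow_natCast, ← Real.rpow_mul (by positivity), Real.mul_rpow (by norm_num) hR.le]
    norm_num [mul_comm]
  have h10 : (10 * R) ^ (s * p + (n + 1 : ℕ)) =
      (10:ℝ) ^ (s * p + (n + 1 : ℕ)) * (R ^ (s * p) * R ^ (n + 1)) := by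
    rw [Real.mul_rpow (by norm_num) hR.le, Real.rpow_add hR, Real.rpow_natCast]
  have hRp : R ^ p = R ^ (s * p) * (R ^ (2 * ε) * R ^ (2 * ε)) := by
    rw [← Real.rpow_add hR, ← Real.rpow_add hR]; congr 1; rw [hε]; ring
  calc κ * R ^ (2 * ε)
      = (((11 * R) ^ (n + 1))⁻¹ / ((11 * R) ^ ε / ε) ^ 2) * R ^ p /
        (10 * R) ^ (s * p + (n + 1 : ℕ)) * (R ^ (n + 1) * c) * (R ^ (n + 1) * c) := by
        rw [div_pow, hsq, h10, hRp, hκ, mul_pow]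
        have a1 : 0 < R ^ (2 * ε) := by positivity
        have a2 : 0 < R ^ (s * p) := by positivity
        have a3 : 0 < (11:ℝ) ^ (2 * ε) := by positivity
        have a4 : 0 < (10:ℝ) ^ (s * p + (n + 1 : ℕ)) := by positivity
        have a5 : 0 < R ^ (n + 1) := by positivity
        have a6 : 0 < (11:ℝ) ^ (n + 1) := by positivity
        generalize R ^ (2 * ε) = x1 at *
        generalize R ^ (s * p) = x2 at *
        generalize (11:ℝ) ^ (2 * ε) = x3 at *
        generalize (10:ℝ) ^ (s * p + (n + 1 : ℕ)) = x4 at *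
        generalize R ^ (n + 1) = x5 at *
        generalize (11:ℝ) ^ (n + 1) = x6 at *
        field_simp
    _ ≤ _ := by
        have := (auxV_pos n (8 * R)).le
        gcongr

lemma aux_full (n : ℕ) (s p ρ : ℝ) (hp : 1 ≤ p) (hs0 : 0 < s) (hs : s < 1)
    (Γ U : Set (EuclideanSpace ℝ (Fin (n + 1)))) (hU : IsOpen U)
    (hΓ : Γ ⊆ Metric.sphere 0 1) (hpos : 0 < μH[(n : ℝ)] Γ)
    (hKU : {x : EuclideanSpace ℝ (Fin (n + 1)) | ρ < ‖x‖ ∧ ‖x‖⁻¹ • x ∈ Γ} ⊆ U) :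
    screenedSeminorm (n + 1) s p U (fun _ => ⊤) (fun x => auxg n p ‖x‖) = ⊤ := by
  unfold screenedSeminorm
  rw [ENNReal.rpow_eq_top_iff_of_pos (by positivity)]
  set A := {x : EuclideanSpace ℝ (Fin (n + 1)) | 1 < ‖x‖ ∧ ‖x‖ ≤ 2 ∧ ‖x‖⁻¹ • x ∈ Γ} with hA
  have hA0 : volume A ≠ 0 := aux_shell_pos n Γ hΓ hpos
  have hAtop : volume A ≠ ⊤ := by
    refine ne_top_of_le_ne_top (measure_closedBall_lt_top (μ := volume)
      (x := (0 : EuclideanSpace ℝ (Fin (n + 1)))) (r := 2)).ne (measure_mono ?_)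
    intro x hx
    simpa using hx.2.1
  set c := (volume A).toReal with hc
  have hc0 : 0 < c := ENNReal.toReal_pos hA0 hAtop
  have hcA : volume A = ENNReal.ofReal c := (ENNReal.ofReal_toReal hAtop).symm
  let S : ℝ → Set (EuclideanSpace ℝ (Fin (n + 1))) := fun R => U ∩ {x | R < ‖x‖ ∧ ‖x‖ ≤ 2 * R}
  have hSm : ∀ R, MeasurableSet (S R) := fun R =>
    hU.measurableSet.inter ((measurableSet_lt measurable_const measurable_norm).inter
      (measurableSet_le measurable_norm measurable_const))
  have hSvol : ∀ R, 1 ≤ R → ρ ≤ R → ENNReal.ofReal (R ^ (n + 1) * c) ≤ volume (S R) := by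
    intro R hR hRρ
    have hR0 : 0 < R := by linarith
    rw [ENNReal.ofReal_mul (by positivity), ← hcA]
    have h1 := Measure.addHaar_smul (volume : Measure (EuclideanSpace ℝ (Fin (n + 1)))) R A
    rw [finrank_euclideanSpace_fin, abs_of_pos (by positivity)] at h1
    rw [← h1]
    refine measure_mono ?_
    rintro _ ⟨x, ⟨hx1, hx2, hx3⟩, rfl⟩
    have hn : ‖R • x‖ = R * ‖x‖ := by rw [norm_smul, Real.norm_of_nonneg hR0.le]
    refine ⟨hKU ⟨?_, ?_⟩, ?_, ?_⟩
    · simp only []; rw [hn]; nlinarith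
    · simp only []
      rw [hn, smul_smul]
      convert hx3 using 2
      field_simp
    · simp only []; rw [hn]; nlinarith
    · simp only []; rw [hn]; nlinarith
  refine ENNReal.eq_top_of_forall_nnreal_le fun M => ?_
  obtain ⟨R, hR1, hRρ, hM⟩ := aux_growth n s p ρ c M hp hs0 hs hc0
  have hR0 : 0 < R := by linarith
  set L := auxV n (8 * R) * (2 * R) ^ p / (10 * R) ^ (s * p + (n + 1 : ℕ)) with hL
  have hV8 := (auxV_pos n (8 * R)).le
  have hL0 : 0 ≤ L := by positivity
  have hM' : (M : ℝ≥0∞) ≤ ENNReal.ofReal L * ENNReal.ofReal ((4 * R) ^ (n + 1) * c) *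
      ENNReal.ofReal (R ^ (n + 1) * c) := by
    rw [← ENNReal.ofReal_mul hL0, ← ENNReal.ofReal_mul (by positivity)]
    rw [← ENNReal.ofReal_coe_nnreal]
    exact ENNReal.ofReal_le_ofReal hM
  refine hM'.trans ?_
  calc _ ≤ ENNReal.ofReal L * volume (S (4 * R)) * volume (S R) := by
        gcongr
        · exact hSvol _ (by linarith) (by linarith)
        · exact hSvol _ hR1 hRρ
    _ = ∫⁻ x in S R, ∫⁻ y in S (4 * R), ENNReal.ofReal L := by
        rw [setLIntegral_const, setLIntegral_const]
    _ ≤ ∫⁻ x in S R, ∫⁻ y in S (4 * R), ENNReal.ofReal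
          (|auxg n p ‖y‖ - auxg n p ‖x‖| ^ p / dist y x ^ (s * p + (n + 1 : ℕ))) := by
        refine setLIntegral_mono' (hSm _) fun x hx => setLIntegral_mono' (hSm _) fun y hy =>
          ENNReal.ofReal_le_ofReal ?_
        obtain ⟨-, hx1, hx2⟩ := hx
        obtain ⟨-, hy1, hy2⟩ := hy
        have hlow := auxg_lower n p hp ‖x‖ ‖y‖ (8 * R) (by linarith) (by linarith)
        have hw := (auxw_pos n p (8 * R)).le
        have hlow2 : auxw n p (8 * R) * (2 * R) ≤ |auxg n p ‖y‖ - auxg n p ‖x‖| := by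
          refine le_trans ?_ (hlow.trans (le_abs_self _))
          gcongr; linarith
        have hd : dist y x ≤ 10 * R := by
          rw [dist_eq_norm]; exact (norm_sub_le _ _).trans (by linarith)
        have hd0 : 0 < dist y x := by
          rw [dist_eq_norm]
          have := norm_sub_norm_le y x
          linarith
        rw [hL, ← auxw_pow n p _ hp, ← Real.mul_rpow hw (by positivity)]
        gcongr
    _ ≤ ∫⁻ x in U, ∫⁻ y in S (4 * R), ENNReal.ofReal
          (|auxg n p ‖y‖ - auxg n p ‖x‖| ^ p / dist y x ^ (s * p + (n + 1 : ℕ))) :=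
        lintegral_mono_set Set.inter_subset_left
    _ ≤ _ := by
        refine lintegral_mono fun x => lintegral_mono_set ?_
        intro y hy
        exact ⟨hy.1, edist_lt_top y x⟩

theorem statement11 (N : ℕ) (p : ℝ) (hp : 1 ≤ p)
    (Γ : Set (EuclideanSpace ℝ (Fin N))) (hΓsub : Γ ⊆ Metric.sphere 0 1)
    (hΓpos : 0 < μH[(N : ℝ) - 1] Γ)
    (ρ : ℝ) (hρ : 0 ≤ ρ)
    (U : Set (EuclideanSpace ℝ (Fin N))) (hU : IsOpen U)
    (hKU : {x : EuclideanSpace ℝ (Fin N) | ρ < ‖x‖ ∧ ‖x‖⁻¹ • x ∈ Γ} ⊆ U) :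
    ∃ u : EuclideanSpace ℝ (Fin N) → ℝ, LocallyIntegrableOn u U ∧
      ∀ s : ℝ, 0 < s → s < 1 →
        screenedSeminorm N s p U (fun _ => 1) u < ⊤ ∧
        screenedSeminorm N s p U (fun _ => ⊤) u = ⊤ := by
  rcases N with _ | n
  · exfalso
    have : Γ = ∅ := by
      refine Set.eq_empty_of_forall_notMem fun x hx => ?_
      have h := hΓsub hx
      rw [Subsingleton.elim x 0] at h
      simp at h
    simp [this] at hΓpos
  · have hcast : ((n + 1 : ℕ) : ℝ) - 1 = n := by push_cast; ring
    rw [hcast] at hΓpos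
    refine ⟨fun x => auxg n p ‖x‖, ?_, fun s hs0 hs1 => ⟨?_, ?_⟩⟩
    · exact (((auxg_cont n p hp).comp continuous_norm).locallyIntegrable).locallyIntegrableOn U
    · exact aux_screened n s p hp hs1 U
    · exact aux_full n s p ρ hp hs0 hs1 Γ U hU hΓsub hΓpos hKU
end

section
/- Let 1 ≤ p < ∞ and 0 < s < 1, and let σ : ℝ^N → (0,∞) be a screening function with 0 < inf_{ℝ^N} σ ≤ sup_{ℝ^N} σ < ∞. Then for every f ∈ W̃^{s,p}_{(σ)}(ℝ^N) and every ε > 0 there exists g ∈ C^∞(ℝ^N) ∩ W̃^{s,p}_{(σ)}(ℝ^N) with |f − g|_{W̃^{s,p}_{(σ)}(ℝ^N)} ≤ ε; that is, smooth functions are dense in W̃^{s,p}_{(σ)}(ℝ^N) with respect to its seminorm. -/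
open MeasureTheory Metric
open scoped ENNReal

/-- The screened homogeneous fractional Sobolev seminorm on all of `ℝ^N`:
`|f|_{W̃^{s,p}_{(σ)}(ℝ^N)} = (∫_{ℝ^N} ∫_{B(0,σ(x))} |f(x+h)-f(x)|^p / |h|^{sp+N} dh dx)^{1/p}`,
valued in `ℝ≥0∞`, for a real-valued screening function `σ`. -/
noncomputable def screenedSeminormR (N : ℕ) (s p : ℝ)
    (σ : EuclideanSpace ℝ (Fin N) → ℝ)
    (f : EuclideanSpace ℝ (Fin N) → ℝ) : ℝ≥0∞ :=
  (∫⁻ x, ∫⁻ h in Metric.ball (0 : EuclideanSpace ℝ (Fin N)) (σ x),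
      ENNReal.ofReal (|f (x + h) - f x| ^ p / ‖h‖ ^ (s * p + N))) ^ (1 / p)

/-- The truncated kernel `‖h‖^{-(s+N/p)}` on the ball of radius `R`. -/
noncomputable def kerR (N : ℕ) (s p R : ℝ) (h : EuclideanSpace ℝ (Fin N)) : ℝ :=
  (Metric.ball (0 : EuclideanSpace ℝ (Fin N)) R).indicator
    (fun h => ‖h‖ ^ (-((s * p + N) / p))) h

/-- The weighted difference function. -/
noncomputable def diffR (N : ℕ) (s p R : ℝ) (u : EuclideanSpace ℝ (Fin N) → ℝ)
    (z : EuclideanSpace ℝ (Fin N) × EuclideanSpace ℝ (Fin N)) : ℝ :=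
  (u (z.1 + z.2) - u z.1) * kerR N s p R z.2

lemma measurable_kerR (N : ℕ) (s p R : ℝ) : Measurable (kerR N s p R) := by
  unfold kerR
  exact Measurable.indicator (by fun_prop) measurableSet_ball

lemma kerR_nonneg (N : ℕ) (s p R : ℝ) (h) : 0 ≤ kerR N s p R h := by
  unfold kerR
  exact Set.indicator_nonneg (fun _ _ => by positivity) _

lemma measurable_diffR (N : ℕ) (s p R : ℝ) (u : EuclideanSpace ℝ (Fin N) → ℝ)
    (hu : Measurable u) : Measurable (diffR N s p R u) := by
  unfold diffR
  have := measurable_kerR N s p R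
  fun_prop

lemma seminorm_const_eq (N : ℕ) (s p R : ℝ) (hp : 1 ≤ p) (hs0 : 0 < s)
    (u : EuclideanSpace ℝ (Fin N) → ℝ) (hu : Measurable u) :
    screenedSeminormR N s p (fun _ => R) u = eLpNorm (diffR N s p R u) (ENNReal.ofReal p) volume := by
  have hp0 : 0 < p := by linarith
  rw [eLpNorm_eq_lintegral_rpow_enorm_toReal (by simpa using hp0) (by simp),
    ENNReal.toReal_ofReal hp0.le]
  unfold screenedSeminormR
  congr 1
  rw [Measure.volume_eq_prod, lintegral_prod _ (by
    have := measurable_diffR N s p R u hu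
    exact (this.enorm.pow_const p).aemeasurable)]
  refine lintegral_congr fun x => ?_
  rw [← lintegral_indicator measurableSet_ball]
  refine lintegral_congr fun h => ?_
  unfold diffR kerR
  by_cases hh : h ∈ ball (0 : EuclideanSpace ℝ (Fin N)) R
  · simp only [Set.indicator_of_mem hh]
    rw [Real.enorm_eq_ofReal_abs, ENNReal.ofReal_rpow_of_nonneg (abs_nonneg _) hp0.le]
    congr 1
    rw [abs_mul, Real.mul_rpow (abs_nonneg _) (abs_nonneg _), div_eq_mul_inv]
    congr 1
    rw [abs_of_nonneg (by positivity), ← Real.rpow_mul (norm_nonneg _), ← Real.rpow_neg (norm_nonneg _)]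
    congr 1
    field_simp
  · simp only [Set.indicator_of_notMem hh]
    simp [hp0]

lemma seminorm_mono (N : ℕ) (s p : ℝ) (hp : 1 ≤ p) (σ τ : EuclideanSpace ℝ (Fin N) → ℝ)
    (h : ∀ x, σ x ≤ τ x) (u : EuclideanSpace ℝ (Fin N) → ℝ) :
    screenedSeminormR N s p σ u ≤ screenedSeminormR N s p τ u := by
  unfold screenedSeminormR
  refine ENNReal.rpow_le_rpow ?_ (by positivity)
  exact lintegral_mono fun x => lintegral_mono_set (ball_subset_ball (h x))

lemma seminorm_congr_s14 (N : ℕ) (s p : ℝ) (σ : EuclideanSpace ℝ (Fin N) → ℝ)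
    (u v : EuclideanSpace ℝ (Fin N) → ℝ) (h : u =ᵐ[volume] v) :
    screenedSeminormR N s p σ u = screenedSeminormR N s p σ v := by
  unfold screenedSeminormR
  congr 1
  refine lintegral_congr_ae ?_
  filter_upwards [h] with x hx
  refine lintegral_congr_ae (ae_restrict_of_ae ?_)
  have := (measurePreserving_add_left (volume : Measure (EuclideanSpace ℝ (Fin N))) x).quasiMeasurePreserving.ae h
  filter_upwards [this] with y hy
  rw [hx, hy]

lemma memLp_comp_equiv {V : Type*} [NormedAddCommGroup V] [NormedSpace ℝ V] [FiniteDimensional ℝ V]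
    [MeasurableSpace V] [BorelSpace V] (μ : Measure V) [μ.IsAddHaarMeasure] (q : ℝ≥0∞)
    (F : V → ℝ) (hF : MemLp F q μ) (S : V ≃ₗ[ℝ] V) : MemLp (fun z => F (S z)) q μ := by
  have hdet : LinearMap.det (S : V →ₗ[ℝ] V) ≠ 0 := (LinearEquiv.isUnit_det' S).ne_zero
  have hmap := Measure.map_linearMap_addHaar_eq_smul_addHaar μ hdet
  have hm : Measurable S := (S : V →ₗ[ℝ] V).continuous_of_finiteDimensional.measurable
  refine MemLp.comp_of_map (f := S) (g := F) ?_ hm.aemeasurable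
  have : Measure.map S μ = _ := hmap
  rw [this]
  exact hF.smul_measure (by simp)

/-- `(x,h) ↦ (x + c h, h/2)`. -/
noncomputable def shearE (N : ℕ) (c : ℝ) :
    (EuclideanSpace ℝ (Fin N) × EuclideanSpace ℝ (Fin N)) ≃ₗ[ℝ]
    (EuclideanSpace ℝ (Fin N) × EuclideanSpace ℝ (Fin N)) where
  toFun z := (z.1 + c • z.2, (1/2 : ℝ) • z.2)
  invFun z := (z.1 - (2 * c) • z.2, (2:ℝ) • z.2)
  map_add' a b := by ext <;> simp <;> ring
  map_smul' a b := by ext <;> simp <;> ring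
  left_inv a := by ext <;> simp <;> ring
  right_inv a := by ext <;> simp <;> ring

lemma kerR_double (N : ℕ) (s p R : ℝ) (hp : 1 ≤ p) (hs0 : 0 < s)
    (h : EuclideanSpace ℝ (Fin N)) :
    kerR N s p (2 * R) h ≤ kerR N s p R ((1/2 : ℝ) • h) := by
  unfold kerR
  by_cases hh : h ∈ ball (0 : EuclideanSpace ℝ (Fin N)) (2 * R)
  · have h2 : (1/2 : ℝ) • h ∈ ball (0 : EuclideanSpace ℝ (Fin N)) R := by
      simp only [mem_ball_zero_iff, norm_smul] at *
      norm_num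
      linarith
    rw [Set.indicator_of_mem hh, Set.indicator_of_mem h2, norm_smul]
    have : 0 < (s * p + N) / p := by positivity
    rcases eq_or_ne h 0 with rfl | h0
    · simp
    · have hn : 0 < ‖h‖ := norm_pos_iff.mpr h0
      have hh2 : ‖(1/2 : ℝ)‖ = 1/2 := by norm_num
      rw [hh2]
      refine Real.rpow_le_rpow_of_nonpos (by positivity) ?_ (by linarith)
      linarith
  · rw [Set.indicator_of_notMem hh]
    exact Set.indicator_nonneg (fun _ _ => by positivity) _

lemma volume_prod_haar (N : ℕ) :
    (volume : Measure (EuclideanSpace ℝ (Fin N) × EuclideanSpace ℝ (Fin N))).IsAddHaarMeasure := by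
  rw [Measure.volume_eq_prod]
  infer_instance

lemma memLp_double (N : ℕ) (s p R : ℝ) (hp : 1 ≤ p) (hs0 : 0 < s)
    (u : EuclideanSpace ℝ (Fin N) → ℝ) (hu : Measurable u)
    (h : MemLp (diffR N s p R u) (ENNReal.ofReal p) volume) :
    MemLp (diffR N s p (2 * R) u) (ENNReal.ofReal p) volume := by
  have := volume_prod_haar N
  have h1 := memLp_comp_equiv volume _ _ h (shearE N 0)
  have h2 := memLp_comp_equiv volume _ _ h (shearE N (1/2))
  refine MemLp.mono' (h1.norm.add h2.norm) (measurable_diffR N s p _ u hu).aestronglyMeasurable ?_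
  refine Filter.Eventually.of_forall fun z => ?_
  obtain ⟨x, y⟩ := z
  have e1 : shearE N 0 (x, y) = (x, (1/2 : ℝ) • y) := by simp [shearE]
  have e2 : shearE N (1/2) (x, y) = (x + (1/2 : ℝ) • y, (1/2 : ℝ) • y) := by simp [shearE]
  have e3 : x + (1/2 : ℝ) • y + (1/2 : ℝ) • y = x + y := by
    rw [add_assoc, ← add_smul]; norm_num
  simp only [Pi.add_apply, e1, e2, diffR, e3, norm_mul, Real.norm_eq_abs]
  rw [abs_of_nonneg (kerR_nonneg N s p _ _), abs_of_nonneg (kerR_nonneg N s p _ _), ← add_mul]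
  refine mul_le_mul ?_ (kerR_double N s p R hp hs0 y) (kerR_nonneg N s p _ _) (by positivity)
  have := abs_add_le (u (x + (1/2 : ℝ) • y) - u x) (u (x + y) - u (x + (1/2 : ℝ) • y))
  refine le_trans (le_of_eq ?_) this
  congr 1; ring

lemma memLp_mono_radius (N : ℕ) (s p R R' : ℝ) (hR : R ≤ R')
    (u : EuclideanSpace ℝ (Fin N) → ℝ) (hu : Measurable u)
    (h : MemLp (diffR N s p R' u) (ENNReal.ofReal p) volume) :
    MemLp (diffR N s p R u) (ENNReal.ofReal p) volume := by
  refine MemLp.mono h (measurable_diffR N s p _ u hu).aestronglyMeasurable ?_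
  refine Filter.Eventually.of_forall fun z => ?_
  simp only [diffR, norm_mul]
  gcongr
  unfold kerR
  by_cases hh : z.2 ∈ ball (0 : EuclideanSpace ℝ (Fin N)) R
  · rw [Set.indicator_of_mem hh, Set.indicator_of_mem (ball_subset_ball hR hh)]
  · rw [Set.indicator_of_notMem hh]; simp

lemma memLp_all (N : ℕ) (s p R : ℝ) (hR : 0 < R) (hp : 1 ≤ p) (hs0 : 0 < s)
    (u : EuclideanSpace ℝ (Fin N) → ℝ) (hu : Measurable u)
    (h : MemLp (diffR N s p R u) (ENNReal.ofReal p) volume) (M : ℝ) :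
    MemLp (diffR N s p M u) (ENNReal.ofReal p) volume := by
  have key : ∀ n : ℕ, MemLp (diffR N s p (2 ^ n * R) u) (ENNReal.ofReal p) volume := by
    intro n
    induction n with
    | zero => simpa using h
    | succ n ih =>
      have := memLp_double N s p _ hp hs0 u hu ih
      rwa [← mul_assoc, ← pow_succ'] at this
  obtain ⟨n, hn⟩ := pow_unbounded_of_one_lt (M / R) (one_lt_two)
  refine memLp_mono_radius N s p M _ ?_ u hu (key n)
  rw [div_lt_iff₀ hR] at hn
  exact hn.le

/-- Continuity of translations in `L^p`. -/
lemma translation_cont {V : Type*} [NormedAddCommGroup V] [NormedSpace ℝ V] [FiniteDimensional ℝ V]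
    [MeasurableSpace V] [BorelSpace V] (μ : Measure V) [μ.IsAddHaarMeasure] (q : ℝ≥0∞)
    (hq : 1 ≤ q) (hq' : q ≠ ⊤)
    (F : V → ℝ) (hF : MemLp F q μ) :
    Filter.Tendsto (fun v : V => eLpNorm (fun z => F (v + z) - F z) q μ) (nhds 0) (nhds 0) := by
  have : Fact (1 ≤ q) := ⟨hq⟩
  have : Fact (q ≠ ⊤) := ⟨hq'⟩
  have hc : Continuous (fun v : V => (DomAddAct.mk v : Vᵈᵃᵃ) +ᵥ hF.toLp F) := by
    have h1 : Continuous (fun v : V => (DomAddAct.mk v : Vᵈᵃᵃ)) := DomAddAct.continuous_mk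
    fun_prop
  have h2 : Continuous (fun v : V => edist ((DomAddAct.mk v : Vᵈᵃᵃ) +ᵥ hF.toLp F) (hF.toLp F)) := by
    fun_prop
  have h3 := h2.tendsto 0
  have e : ∀ v : V, edist ((DomAddAct.mk v : Vᵈᵃᵃ) +ᵥ hF.toLp F) (hF.toLp F)
      = eLpNorm (fun z => F (v + z) - F z) q μ := by
    intro v
    rw [DomAddAct.mk_vadd_toLp, Lp.edist_toLp_toLp]
    rfl
  simp only [e] at h3
  simpa using h3

lemma jensen_rpow {α : Type*} [MeasurableSpace α] (ν : Measure α) [IsProbabilityMeasure ν]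
    (p : ℝ) (hp : 1 ≤ p) (X : α → ℝ) (hX : AEStronglyMeasurable X ν) :
    (∫⁻ t, ‖X t‖ₑ ∂ν) ^ p ≤ ∫⁻ t, ‖X t‖ₑ ^ p ∂ν := by
  have hp0 : 0 < p := by linarith
  have := eLpNorm'_le_eLpNorm'_of_exponent_le zero_lt_one hp ν hX
  simp only [eLpNorm', ENNReal.rpow_one, div_one, one_div] at this
  calc _ ≤ ((∫⁻ t, ‖X t‖ₑ ^ p ∂ν) ^ p⁻¹) ^ p := ENNReal.rpow_le_rpow this hp0.le
    _ = _ := by rw [← ENNReal.rpow_mul, inv_mul_cancel₀ hp0.ne', ENNReal.rpow_one]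

/-- The mollification. -/
noncomputable def mollR (N : ℕ) (φ : ContDiffBump (0 : EuclideanSpace ℝ (Fin N)))
    (f : EuclideanSpace ℝ (Fin N) → ℝ) : EuclideanSpace ℝ (Fin N) → ℝ :=
  convolution (φ.normed volume) f (ContinuousLinearMap.lsmul ℝ ℝ) volume

lemma moll_contDiff (N : ℕ) (φ : ContDiffBump (0 : EuclideanSpace ℝ (Fin N)))
    (f : EuclideanSpace ℝ (Fin N) → ℝ) (hf : LocallyIntegrable f) :
    ContDiff ℝ (⊤ : ℕ∞) (mollR N φ f) :=
  φ.hasCompactSupport_normed.contDiff_convolution_left _ φ.contDiff_normed hf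

lemma moll_integrable (N : ℕ) (φ : ContDiffBump (0 : EuclideanSpace ℝ (Fin N)))
    (f : EuclideanSpace ℝ (Fin N) → ℝ) (hf : LocallyIntegrable f) (x) :
    Integrable (fun t => φ.normed volume t * f (x - t)) := by
  have := (φ.hasCompactSupport_normed (μ := volume)).convolutionExists_left
    (ContinuousLinearMap.lsmul ℝ ℝ) φ.continuous_normed hf x
  exact this.integrable

lemma moll_diff (N : ℕ) (s p R : ℝ) (φ : ContDiffBump (0 : EuclideanSpace ℝ (Fin N)))
    (f : EuclideanSpace ℝ (Fin N) → ℝ) (hf : LocallyIntegrable f)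
    (z : EuclideanSpace ℝ (Fin N) × EuclideanSpace ℝ (Fin N)) :
    diffR N s p R (fun x => mollR N φ f x - f x) z =
      ∫ t, φ.normed volume t * (diffR N s p R f ((-t, 0) + z) - diffR N s p R f z) := by
  obtain ⟨x, h⟩ := z
  have e : ∀ y, mollR N φ f y = ∫ t, φ.normed volume t * f (y - t) := fun y => rfl
  have i1 := moll_integrable N φ f hf (x + h)
  have i2 := moll_integrable N φ f hf x
  have i3 : Integrable (φ.normed (volume : Measure (EuclideanSpace ℝ (Fin N)))) :=
    φ.integrable_normed
  have e2 : ∀ t, φ.normed volume t * (diffR N s p R f ((-t, 0) + (x, h)) - diffR N s p R f (x, h))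
      = ((φ.normed volume t * f (x + h - t) - φ.normed volume t * f (x - t))
        - φ.normed volume t * (f (x + h) - f x)) * kerR N s p R h := by
    intro t
    have a1 : x - t + h = x + h - t := by abel
    have a2 : -t + x = x - t := by abel
    simp only [diffR, Prod.mk_add_mk, zero_add, a2, a1]
    ring
  simp only [e2]
  have i12 : Integrable (fun t => φ.normed volume t * f (x + h - t) - φ.normed volume t * f (x - t)) :=
    i1.sub i2
  rw [integral_mul_const, integral_sub i12 (i3.mul_const _), integral_sub i1 i2,
    integral_mul_const, φ.integral_normed]
  simp only [diffR, e]
  ring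

lemma moll_bound (N : ℕ) (s p R δ : ℝ) (hp : 1 ≤ p)
    (φ : ContDiffBump (0 : EuclideanSpace ℝ (Fin N))) (hφ : φ.rOut ≤ δ)
    (f : EuclideanSpace ℝ (Fin N) → ℝ) (hfm : Measurable f) (hf : LocallyIntegrable f) (η : ℝ≥0∞)
    (hη : ∀ t : EuclideanSpace ℝ (Fin N), ‖t‖ < δ →
      ∫⁻ z, ‖diffR N s p R f ((-t, 0) + z) - diffR N s p R f z‖ₑ ^ p ≤ η) :
    ∫⁻ z, ‖diffR N s p R (fun x => mollR N φ f x - f x) z‖ₑ ^ p ≤ η := by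
  have hD := measurable_diffR N s p R f hfm
  set d : EuclideanSpace ℝ (Fin N) → ℝ≥0∞ := fun t => ENNReal.ofReal (φ.normed volume t) with hd
  have hdm : Measurable d := φ.continuous_normed.measurable.ennreal_ofReal
  set ν : Measure (EuclideanSpace ℝ (Fin N)) := volume.withDensity d with hν
  have hprob : IsProbabilityMeasure ν := by
    constructor
    rw [hν, withDensity_apply _ MeasurableSet.univ, Measure.restrict_univ,
      ← ofReal_integral_eq_lintegral_ofReal φ.integrable_normed
        (Filter.Eventually.of_forall φ.nonneg_normed), φ.integral_normed, ENNReal.ofReal_one]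
  have hjm : Measurable (fun q : (EuclideanSpace ℝ (Fin N) × EuclideanSpace ℝ (Fin N)) ×
      EuclideanSpace ℝ (Fin N) =>
      diffR N s p R f ((-q.2, 0) + q.1) - diffR N s p R f q.1) := by
    fun_prop
  calc ∫⁻ z, ‖diffR N s p R (fun x => mollR N φ f x - f x) z‖ₑ ^ p
      ≤ ∫⁻ z, ∫⁻ t, ‖diffR N s p R f ((-t, 0) + z) - diffR N s p R f z‖ₑ ^ p ∂ν := by
        refine lintegral_mono fun z => ?_
        have hzm : Measurable (fun t : EuclideanSpace ℝ (Fin N) =>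
          diffR N s p R f ((-t, 0) + z) - diffR N s p R f z) := by fun_prop
        refine le_trans ?_ (jensen_rpow ν p hp _ hzm.aestronglyMeasurable)
        refine ENNReal.rpow_le_rpow ?_ (by linarith)
        rw [moll_diff N s p R φ f hf z]
        refine (enorm_integral_le_lintegral_enorm _).trans (le_of_eq ?_)
        rw [hν, lintegral_withDensity_eq_lintegral_mul _ hdm hzm.enorm]
        refine lintegral_congr fun t => ?_
        rw [Pi.mul_apply, enorm_mul, hd, Real.enorm_of_nonneg (φ.nonneg_normed t)]
    _ = ∫⁻ t, (∫⁻ z, ‖diffR N s p R f ((-t, 0) + z) - diffR N s p R f z‖ₑ ^ p) ∂ν := by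
        refine lintegral_lintegral_swap ?_
        exact (hjm.enorm.pow_const p).aemeasurable
    _ ≤ ∫⁻ t, η ∂ν := by
        refine lintegral_mono_ae ?_
        rw [hν, ae_withDensity_iff hdm]
        refine Filter.Eventually.of_forall fun t ht => hη t ?_
        have : t ∈ Function.support (φ.normed volume) := by
          intro h0
          apply ht
          simp [hd, h0]
        rw [φ.support_normed_eq, mem_ball_zero_iff] at this
        linarith
    _ = η := by simp

lemma diffR_sub (N : ℕ) (s p R : ℝ) (u v : EuclideanSpace ℝ (Fin N) → ℝ) :
    diffR N s p R (fun x => u x - v x) = diffR N s p R u - diffR N s p R v := by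
  ext z
  simp only [diffR, Pi.sub_apply]
  ring

lemma main_measurable (N : ℕ) (p s : ℝ) (hp : 1 ≤ p)
    (M : ℝ) (f : EuclideanSpace ℝ (Fin N) → ℝ) (hfm : Measurable f)
    (hfloc : LocallyIntegrable f) (hf : MemLp (diffR N s p M f) (ENNReal.ofReal p) volume)
    (ε : ℝ) (hε : 0 < ε) :
    ∃ g : EuclideanSpace ℝ (Fin N) → ℝ,
      ContDiff ℝ (⊤ : ℕ∞) g ∧ MemLp (diffR N s p M g) (ENNReal.ofReal p) volume ∧
      eLpNorm (diffR N s p M (fun x => f x - g x)) (ENNReal.ofReal p) volume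
        ≤ ENNReal.ofReal ε := by
  have hp0 : 0 < p := by linarith
  have := volume_prod_haar N
  have ht := translation_cont volume (ENNReal.ofReal p) (by simpa using hp) (by simp) _ hf
  have hc : Filter.Tendsto (fun t : EuclideanSpace ℝ (Fin N) =>
      ((-t, 0) : EuclideanSpace ℝ (Fin N) × EuclideanSpace ℝ (Fin N))) (nhds 0) (nhds 0) := by
    have : Continuous (fun t : EuclideanSpace ℝ (Fin N) =>
      ((-t, 0) : EuclideanSpace ℝ (Fin N) × EuclideanSpace ℝ (Fin N))) := by fun_prop
    have h0 := this.tendsto 0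
    rw [neg_zero] at h0
    exact h0
  have hev := (ht.comp hc).eventually (ge_mem_nhds (ENNReal.ofReal_pos.mpr hε))
  obtain ⟨δ, hδ, hball⟩ := Metric.eventually_nhds_iff.mp hev
  let φ : ContDiffBump (0 : EuclideanSpace ℝ (Fin N)) := ⟨δ / 2, δ, by linarith, by linarith⟩
  have hL : ∀ F : EuclideanSpace ℝ (Fin N) × EuclideanSpace ℝ (Fin N) → ℝ,
      eLpNorm F (ENNReal.ofReal p) volume = (∫⁻ z, ‖F z‖ₑ ^ p) ^ (1 / p) := by
    intro F
    rw [eLpNorm_eq_lintegral_rpow_enorm_toReal (by simpa using hp0) (by simp),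
      ENNReal.toReal_ofReal hp0.le]
  have hL' : ∀ F : EuclideanSpace ℝ (Fin N) × EuclideanSpace ℝ (Fin N) → ℝ,
      eLpNorm F (ENNReal.ofReal p) volume ≤ ENNReal.ofReal ε ↔
        ∫⁻ z, ‖F z‖ₑ ^ p ≤ ENNReal.ofReal ε ^ p := by
    intro F
    rw [hL, one_div, ENNReal.rpow_inv_le_iff hp0]
  have hb := moll_bound N s p M δ hp φ le_rfl f hfm hfloc (ENNReal.ofReal ε ^ p) (by
    intro t ht
    rw [← hL' (fun z => diffR N s p M f ((-t, 0) + z) - diffR N s p M f z)]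
    exact hball (by simpa using ht))
  rw [← hL'] at hb
  have hg := moll_contDiff N φ f hfloc
  have hmeas : Measurable (mollR N φ f) := hg.continuous.measurable
  have hmem : MemLp (diffR N s p M (fun x => mollR N φ f x - f x)) (ENNReal.ofReal p) volume :=
    ⟨(measurable_diffR N s p M _ (hmeas.sub hfm)).aestronglyMeasurable,
      hb.trans_lt ENNReal.ofReal_lt_top⟩
  refine ⟨mollR N φ f, hg, ?_, ?_⟩
  · have := hmem.add hf
    rwa [diffR_sub, sub_add_cancel] at this
  · rw [diffR_sub, ← eLpNorm_neg, neg_sub, ← diffR_sub]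
    exact hb

/-- Let `1 ≤ p < ∞`, `0 < s < 1`, and let `σ : ℝ^N → (0,∞)` be a
screening function with `0 < inf σ ≤ sup σ < ∞`.  Then smooth functions are dense in
`W̃^{s,p}_{(σ)}(ℝ^N)` with respect to its seminorm: for every `f` in the space and every
`ε > 0` there exists `g ∈ C^∞(ℝ^N) ∩ W̃^{s,p}_{(σ)}(ℝ^N)` with
`|f - g|_{W̃^{s,p}_{(σ)}(ℝ^N)} ≤ ε`. -/
theorem statement14 (N : ℕ) (p s : ℝ) (hp : 1 ≤ p) (hs0 : 0 < s) (hs1 : s < 1)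
    (σ : EuclideanSpace ℝ (Fin N) → ℝ) (hσlsc : LowerSemicontinuous σ)
    (m M : ℝ) (hm : 0 < m) (hσbd : ∀ x, m ≤ σ x ∧ σ x ≤ M)
    (f : EuclideanSpace ℝ (Fin N) → ℝ)
    (hfloc : LocallyIntegrable f) (hf : screenedSeminormR N s p σ f < ⊤)
    (ε : ℝ) (hε : 0 < ε) :
    ∃ g : EuclideanSpace ℝ (Fin N) → ℝ,
      ContDiff ℝ (⊤ : ℕ∞) g ∧ LocallyIntegrable g ∧
      screenedSeminormR N s p σ g < ⊤ ∧
      screenedSeminormR N s p σ (fun x => f x - g x) ≤ ENNReal.ofReal ε := by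

  have hp0 : 0 < p := by linarith
  have hfa := hfloc.aestronglyMeasurable
  set f₀ := hfa.mk f with hf₀
  have hae : f =ᵐ[volume] f₀ := hfa.ae_eq_mk
  have hm₀ : Measurable f₀ := hfa.stronglyMeasurable_mk.measurable
  have hloc₀ : LocallyIntegrable f₀ := fun x => by
    obtain ⟨U, hU, hi⟩ := hfloc x
    exact ⟨U, hU, hi.congr (ae_restrict_of_ae hae)⟩
  have hmem : MemLp (diffR N s p m f₀) (ENNReal.ofReal p) volume := by
    refine ⟨(measurable_diffR N s p m _ hm₀).aestronglyMeasurable, ?_⟩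
    rw [← seminorm_const_eq N s p m hp hs0 f₀ hm₀]
    refine (seminorm_mono N s p hp _ σ (fun x => (hσbd x).1) f₀).trans_lt ?_
    rwa [← seminorm_congr_s14 N s p σ f f₀ hae]
  obtain ⟨g, hg, hgm, hgε⟩ := main_measurable N p s hp M f₀ hm₀ hloc₀
    (memLp_all N s p m hm hp hs0 f₀ hm₀ hmem M) ε hε
  have hgmeas : Measurable g := hg.continuous.measurable
  refine ⟨g, hg, hg.continuous.locallyIntegrable, ?_, ?_⟩
  · refine (seminorm_mono N s p hp σ (fun _ => M) (fun x => (hσbd x).2) g).trans_lt ?_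
    rw [seminorm_const_eq N s p M hp hs0 g hgmeas]
    exact hgm.2
  · rw [seminorm_congr_s14 N s p σ (fun x => f x - g x) (fun x => f₀ x - g x)
      (by filter_upwards [hae] with x hx; rw [hx])]
    refine (seminorm_mono N s p hp σ (fun _ => M) (fun x => (hσbd x).2) _).trans ?_
    rw [seminorm_const_eq N s p M hp hs0 (fun x => f₀ x - g x) (hm₀.sub hgmeas)]
    exact hgε
end
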